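/- arXiv:2406.03021 — 3 statements merged into one kernel-verified Lean document; each statement's English description precedes it below -/
import Mathlib

section
/- For every non-crossing partition σ of {1̄,…,n̄}, the concordance vector w_σ lies in the image of ⋀^{n-1}V inside ⋀^{n-1}ℝ^{2n}, and all of its coordinates with respect to the basis of ⋀^{n-1}V induced by v_1,…,v_{2n−2} are equal to 0 or 1. That is, there exist coefficients c_J ∈ {0,1}, indexed by (n−1)-element subsets J = {j_1 < … < j_{n−1}} of {1,…,2n−2}, such that w_σ = Σ_J c_J · v_{j_1} ∧ v_{j_2} ∧ … ∧ v_{j_{n−1}}. -/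
open scoped Classical

noncomputable section

/-- `P` is a set partition of the finite ground set `G` (of integers): its blocks are nonempty
subsets of `G`, and every element of `G` lies in exactly one block. -/
def IsPartitionOf (G : Finset ℕ) (P : Finset (Finset ℕ)) : Prop :=
  (∀ B ∈ P, B.Nonempty) ∧ (∀ B ∈ P, B ⊆ G) ∧ ∀ x ∈ G, ∃! B, B ∈ P ∧ x ∈ B

/-- A collection of blocks is non-crossing: there are no `a < b < c < d` with `a, c` in one
block and `b, d` in a different block. -/
def NonCrossing (P : Finset (Finset ℕ)) : Prop :=
  ∀ a b c d : ℕ, a < b → b < c → c < d →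
    ∀ B₁ ∈ P, ∀ B₂ ∈ P, a ∈ B₁ → c ∈ B₁ → b ∈ B₂ → d ∈ B₂ → B₁ = B₂

/-- The set `{1, 3, …, 2n-1}` of "barred" boundary indices `k̄ = 2k-1`. -/
def oddSet (n : ℕ) : Finset ℕ := (Finset.range n).image fun k => 2 * k + 1

/-- The set `{2, 4, …, 2n}` of "tilde" boundary indices `k̃ = 2k`. -/
def evenSet (n : ℕ) : Finset ℕ := (Finset.range n).image fun k => 2 * k + 2

/-- `σ` is a non-crossing partition of `{1̄,…,n̄}` and `σd` is its dual: a non-crossing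
partition of `{1̃,…,ñ}` such that the merged partition `σ ∪ σd` is non-crossing and the
numbers of blocks add up to `n + 1`. -/
def IsNCPair (n : ℕ) (σ σd : Finset (Finset ℕ)) : Prop :=
  IsPartitionOf (oddSet n) σ ∧ NonCrossing σ ∧
    IsPartitionOf (evenSet n) σd ∧ NonCrossing σd ∧
    NonCrossing (σ ∪ σd) ∧ σ.card + σd.card = n + 1

/-- An `(n-1)`-element subset `I ⊆ {1,…,2n}` is concordant with `σ` if every block of `σ`
and every block of the dual `σd` contains exactly one element not in `I`. -/
def ConcordantWith (σ σd : Finset (Finset ℕ)) (I : Finset ℕ) : Prop :=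
  ∀ B ∈ σ ∪ σd, (B \ I).card = 1

/-- `stdE n i` is the `i`-th standard basis vector (1-indexed) of `ℝ^{2n}`. -/
def stdE (n i : ℕ) : Fin (2 * n) → ℝ := fun t => if (t : ℕ) + 1 = i then 1 else 0

/-- The wedge `e_{i_1} ∧ … ∧ e_{i_k}` over the increasing enumeration `i_1 < … < i_k`
of a finite set `I` of (1-indexed) indices. -/
def finsetWedge (n k : ℕ) (I : Finset ℕ) : ExteriorAlgebra ℝ (Fin (2 * n) → ℝ) :=
  ExteriorAlgebra.ιMulti ℝ k fun p => stdE n ((I.sort (· ≤ ·)).getD p.val 0)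

/-- The concordance vector `w_σ = Σ_I e_I ∈ ⋀^{n-1} ℝ^{2n}`, the sum over all
`(n-1)`-element subsets `I` of `{1,…,2n}` concordant with `σ`. -/
def concVec (n : ℕ) (σ σd : Finset (Finset ℕ)) : ExteriorAlgebra ℝ (Fin (2 * n) → ℝ) :=
  ∑ I ∈ ((Finset.Icc 1 (2 * n)).powersetCard (n - 1)).filter (ConcordantWith σ σd),
    finsetWedge n (n - 1) I

end
noncomputable section

/-- The basis vectors `v_k = e_k + e_{k+2}`, `k = 1, …, 2n-2`, of the subspace `V`. -/
def vVec (n k : ℕ) : Fin (2 * n) → ℝ := stdE n k + stdE n (k + 2)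

/-- The wedge `v_{j_1} ∧ … ∧ v_{j_k}` over the increasing enumeration `j_1 < … < j_k`
of a finite set `J` of (1-indexed) indices. -/
def vFinsetWedge (n k : ℕ) (J : Finset ℕ) : ExteriorAlgebra ℝ (Fin (2 * n) → ℝ) :=
  ExteriorAlgebra.ιMulti ℝ k fun p => vVec n ((J.sort (· ≤ ·)).getD p.val 0)

end

open Finset

/-!
Order the arcs of the merged partition `(σ|σ̃)` (pairs of consecutive elements `β p < ν p` of a
block) by left end, and twist the basis vectors to `w j = (-1)^(j/2) e_j`. The concordant sets are
exactly the sets obtained by choosing one end of every arc, all distinct, so `w_σ` is up to sign the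
wedge of the rows `w (β p) - w (ν p)`. Adding later rows to earlier ones, the row of `p` becomes
`∑ (w (b - 1) - w (b + 1))` over the block `b ∈ B` that fills the gap under the arc `p`. Up to sign
its terms are the `v_(b-1)`, and distinct arcs have disjoint gap blocks, so every wedge of `v_j`
occurs at most once. All signs cancel because the `n - 1` arcs use `2n - 2` of the `2n - 1` steps
`(z, z + 1)` as first or last steps, which determines the number of arcs under a given one.
-/

section RepresentativeSets

variable {α : Type*} [DecidableEq α] {k : ℕ}

/-- The sets of distinct representatives of a family `S` of finite sets. -/
def representativeSets (S : Fin k → Finset α) : Finset (Finset α) :=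
  ((Fintype.piFinset S).filter Function.Injective).image fun f => univ.image f

theorem mem_representativeSets {S : Fin k → Finset α} {I : Finset α} :
    I ∈ representativeSets S ↔
      ∃ f : Fin k → α, (∀ p, f p ∈ S p) ∧ f.Injective ∧ univ.image f = I := by
  simp only [representativeSets, mem_image, mem_filter, Fintype.mem_piFinset,
    and_assoc]

theorem representativeSets_subset_powersetCard {S : Fin k → Finset α} {G : Finset α}
    (hS : ∀ p, S p ⊆ G) : representativeSets S ⊆ G.powersetCard k := by
  intro I hI
  obtain ⟨f, hf, hinj, rfl⟩ := mem_representativeSets.1 hI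
  rw [mem_powersetCard, card_image_of_injective _ hinj, card_fin]
  exact ⟨Finset.image_subset_iff.2 fun p _ => hS p (hf p), rfl⟩

theorem eq_of_image_eq_of_pairwise_disjoint {S : Fin k → Finset α}
    (hS : Pairwise (Function.onFun Disjoint S)) {f f' : Fin k → α} (hf : ∀ p, f p ∈ S p)
    (hf' : ∀ p, f' p ∈ S p) (h : univ.image f = univ.image f') : f = f' := by
  funext p
  obtain ⟨q, -, hq⟩ := mem_image.1 (h ▸ mem_image_of_mem f (mem_univ p))
  obtain rfl : p = q := by
    by_contra hne
    exact disjoint_left.1 (hS hne) (hf p) (hq ▸ hf' q)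
  exact hq.symm

end RepresentativeSets

section Wedge

variable {R M N : Type*} [CommRing R] [AddCommGroup M] [Module R M] [AddCommGroup N] [Module R N]
  {k : ℕ} (g : M [⋀^Fin k]→ₗ[R] N)

/-- The value of an alternating map on the vectors `u i`, `i ∈ I`, taken in increasing order of `i`;
it stands for the wedge `u_{i₁} ∧ … ∧ u_{iₖ}`. It is only meaningful when `I` has `k` elements:
missing entries are filled with `u 0` and surplus ones are ignored. -/
def sortedWedge (u : ℕ → M) (I : Finset ℕ) : N :=
  g fun p => u ((I.sort (· ≤ ·)).getD p.val 0)

theorem sortedWedge_eq_orderEmbOfFin (u : ℕ → M) {I : Finset ℕ} (hI : I.card = k) :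
    sortedWedge g u I = g fun p => u (I.orderEmbOfFin hI p) := by
  unfold sortedWedge
  congr 1 with p
  rw [orderEmbOfFin_apply, List.getD_eq_getElem]
  rfl

theorem map_comp_eq_smul_sortedWedge (u : ℕ → M) {f : Fin k → ℕ} (hf : f.Injective) :
    g (u ∘ f) = (∏ p, (-1 : R) ^ #{q | p < q ∧ f q < f p}) •
      sortedWedge g u (univ.image f) := by
  have hcard : (univ.image f).card = k := by
    rw [card_image_of_injective _ hf, card_fin]
  set o := (univ.image f).orderEmbOfFin hcard
  have hrange (p : Fin k) : f p ∈ Set.range o := by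
    simp [o, range_orderEmbOfFin]
  choose π hπ using hrange
  have hπ_inj : π.Injective := fun p q hpq => hf (by rw [← hπ p, ← hπ q, hpq])
  let τ : Equiv.Perm (Fin k) := Equiv.ofBijective π (Finite.injective_iff_bijective.1 hπ_inj)
  have hτ_lt (p q : Fin k) : τ p < τ q ↔ f p < f q := by
    rw [← hπ p, ← hπ q, o.lt_iff_lt]; rfl
  have hcomp : u ∘ f = (fun p => u (o p)) ∘ τ := by
    funext p
    simp [τ, hπ]
  rw [hcomp, g.map_perm, sortedWedge_eq_orderEmbOfFin g u hcard, Equiv.Perm.sign_eq_prod_prod_Ioi,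
    Units.smul_def, ← Int.cast_smul_eq_zsmul R]
  congr 1
  push_cast
  refine prod_congr rfl fun p _ => ?_
  rw [← prod_const, filter_and, filter_lt_eq_Ioi,
    inter_filter, inter_univ, prod_filter]
  refine prod_congr rfl fun q hq => ?_
  have hne : f p ≠ f q := hf.ne (mem_Ioi.1 hq).ne
  rcases hne.lt_or_gt with h | h <;> simp [hτ_lt, h, h.not_gt]

theorem eq_id_of_injective_of_le {s : Fin k → Fin k} (hs : s.Injective) (hle : ∀ p, p ≤ s p) :
    s = id := by
  have hsum : ∑ p : Fin k, (p : ℕ) = ∑ p, (s p : ℕ) :=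
    ((Finite.injective_iff_bijective.1 hs).sum_comp fun p => (p : ℕ)).symm
  funext p
  have hle_val (q : Fin k) (_ : q ∈ univ) : (q : ℕ) ≤ s q := hle q
  exact (Fin.ext ((sum_eq_sum_iff_of_le hle_val).1 hsum p (mem_univ p))).symm

theorem map_eq_map_of_sub_mem_span_Ioi (r r' : Fin k → M)
    (h : ∀ p, r' p - r p ∈ Submodule.span R (r '' Set.Ioi p)) : g r' = g r := by
  have hcoeff (p : Fin k) : ∃ c : Fin k → R, c p = 1 ∧ r' p = ∑ q ∈ Ici p, c q • r q := by
    have hp := h p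
    rw [← coe_Ioi, Submodule.mem_span_image_finset_iff_exists_fun'] at hp
    obtain ⟨c, hc⟩ := hp
    refine ⟨Function.update c p 1, Function.update_self .., ?_⟩
    rw [← Ioi_insert, sum_insert notMem_Ioi_self, Function.update_self,
      one_smul, ← sub_eq_iff_eq_add', ← hc]
    refine sum_congr rfl fun q hq => ?_
    rw [Function.update_of_ne (mem_Ioi.1 hq).ne']
  choose c hc_diag hc using hcoeff
  rw [funext hc, ← AlternatingMap.coe_multilinearMap, MultilinearMap.map_sum_finset]
  simp only [MultilinearMap.map_smul_univ, AlternatingMap.coe_multilinearMap]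
  rw [sum_eq_single id]
  · simp [hc_diag]
  · intro s hs hne
    have hs_not_inj : ¬ s.Injective := fun hinj => hne <|
      eq_id_of_injective_of_le hinj fun p => mem_Ici.1 (Fintype.mem_piFinset.1 hs p)
    rw [g.map_eq_zero_of_not_injective (fun p => r (s p)) fun hinj => hs_not_inj (.of_comp hinj),
      smul_zero]
  · exact fun hid => absurd (Fintype.mem_piFinset.2 fun p => mem_Ici.2 le_rfl) hid

theorem map_sum_eq_sum_representativeSets (u : ℕ → M) (S : Fin k → Finset ℕ) (ε : Fin k → ℕ → ℕ)
    (hsign : ∀ f : Fin k → ℕ, (∀ p, f p ∈ S p) → f.Injective →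
      ∀ p, Even (ε p (f p) + #{q | p < q ∧ f q < f p}))
    (himage : ∀ f f' : Fin k → ℕ, (∀ p, f p ∈ S p) → (∀ p, f' p ∈ S p) → f.Injective →
      f'.Injective → univ.image f = univ.image f' → f = f') :
    g (fun p => ∑ j ∈ S p, (-1 : R) ^ ε p j • u j) =
      ∑ I ∈ representativeSets S, sortedWedge g u I := by
  rw [representativeSets, sum_image, sum_filter, ← AlternatingMap.coe_multilinearMap,
    MultilinearMap.map_sum_finset]
  · refine sum_congr rfl fun f hf => ?_
    rw [MultilinearMap.map_smul_univ, AlternatingMap.coe_multilinearMap]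
    change _ • g (u ∘ f) = _
    split_ifs with hinj
    · rw [map_comp_eq_smul_sortedWedge g u hinj, smul_smul, ← prod_mul_distrib,
        prod_eq_one, one_smul]
      intro p _
      rw [← pow_add]
      exact (hsign f (Fintype.mem_piFinset.1 hf) hinj p).neg_one_pow
    · rw [g.map_eq_zero_of_not_injective _ fun h => hinj (.of_comp h), smul_zero]
  · intro f hf f' hf' h
    simp only [coe_filter, Fintype.mem_piFinset, Set.mem_ofPred_eq] at hf hf'
    exact himage f f' hf.1 hf'.1 hf.2 hf'.2 h

end Wedge

section Part

variable {α : Type*} [DecidableEq α] {s : Finset α} {π : Finpartition s} {x y z : α}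

theorem mem_part_symm (h : y ∈ π.part x) : x ∈ π.part y := by
  obtain ⟨B, hB, hy, hx⟩ := π.mem_part_iff_exists.1 h
  exact π.mem_part_iff_exists.2 ⟨B, hB, hx, hy⟩

theorem mem_of_mem_part (h : y ∈ π.part x) : x ∈ s :=
  π.part_nonempty.1 ⟨y, h⟩

theorem part_eq_of_mem_part (h : y ∈ π.part x) : π.part y = π.part x :=
  π.part_eq_of_mem (π.part_mem.2 (mem_of_mem_part h)) h

theorem mem_part_trans (hxy : y ∈ π.part x) (hyz : z ∈ π.part y) : z ∈ π.part x :=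
  part_eq_of_mem_part hxy ▸ hyz

theorem mem_part_of_mem_of_mem {B : Finset α} (hB : B ∈ π.parts) (hx : x ∈ B) (hy : y ∈ B) :
    y ∈ π.part x :=
  π.mem_part_iff_exists.2 ⟨B, hB, hy, hx⟩

theorem mem_iff_of_mem_part {B : Finset α} (hB : B ∈ π.parts) (h : y ∈ π.part x) :
    x ∈ B ↔ y ∈ B := by
  rw [← π.part_eq_iff_mem hB, ← π.part_eq_iff_mem hB, part_eq_of_mem_part h]

end Part

/-- The arcs of a partition `π` join consecutive elements of a block; `β` and `ν` list their left
and right ends, ordered by left end. -/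
structure IsArcEnumeration {G : Finset ℕ} (π : Finpartition G) {k : ℕ} (β ν : Fin k → ℕ) :
    Prop where
  strictMono_left : StrictMono β
  exists_left_eq : ∀ {x y}, y ∈ π.part x → x < y → ∃ p, β p = x
  right_mem_part : ∀ p, ν p ∈ π.part (β p)
  left_lt_right : ∀ p, β p < ν p
  right_le : ∀ {p y}, y ∈ π.part (β p) → β p < y → ν p ≤ y

theorem exists_isArcEnumeration {G : Finset ℕ} (π : Finpartition G) :
    ∃ (k : ℕ) (β ν : Fin k → ℕ), IsArcEnumeration π β ν := by
  let L := G.filter fun x => ∃ y, y ∈ π.part x ∧ x < y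
  let β := L.orderEmbOfFin rfl
  have hβ (p) : ∃ y, y ∈ π.part (β p) ∧ β p < y := (mem_filter.1 (L.orderEmbOfFin_mem rfl p)).2
  refine ⟨#L, β, fun p => Nat.find (hβ p), β.strictMono, fun {x y} hy hxy => ?_,
    fun p => (Nat.find_spec (hβ p)).1, fun p => (Nat.find_spec (hβ p)).2,
    fun hy hlt => Nat.find_min' _ ⟨hy, hlt⟩⟩
  have hx : x ∈ Set.range β := by
    rw [range_orderEmbOfFin]
    exact mem_filter.2 ⟨mem_of_mem_part hy, y, hy, hxy⟩
  exact hx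

namespace IsArcEnumeration

variable {G : Finset ℕ} {π : Finpartition G} {k : ℕ} {β ν : Fin k → ℕ}

theorem left_mem (hA : IsArcEnumeration π β ν) (p : Fin k) : β p ∈ G :=
  mem_of_mem_part (hA.right_mem_part p)

theorem right_mem (hA : IsArcEnumeration π β ν) (p : Fin k) : ν p ∈ G :=
  π.part_subset _ (hA.right_mem_part p)

theorem exists_right_eq (hA : IsArcEnumeration π β ν) {x y : ℕ} (h : y ∈ π.part x) (hxy : x < y) :
    ∃ p, ν p = y ∧ x ≤ β p ∧ β p ∈ π.part x := by
  have hne : ((π.part x).filter (· < y)).Nonempty :=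
    ⟨x, mem_filter.2 ⟨π.mem_part_self.2 (mem_of_mem_part h), hxy⟩⟩
  obtain ⟨z, hz, hmax⟩ := exists_max_image _ id hne
  simp only [mem_filter, id, and_imp] at hz hmax
  obtain ⟨p, rfl⟩ := hA.exists_left_eq (mem_part_trans (mem_part_symm hz.1) h) hz.2
  refine ⟨p, (hA.right_le (mem_part_trans (mem_part_symm hz.1) h) hz.2).antisymm ?_,
    hmax x (π.mem_part_self.2 (mem_of_mem_part h)) hxy, hz.1⟩
  by_contra! hlt
  exact (hA.left_lt_right p).not_ge (hmax _ (mem_part_trans hz.1 (hA.right_mem_part p)) hlt)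

theorem right_injective (hA : IsArcEnumeration π β ν) : ν.Injective := by
  have hlt {p q : Fin k} (hpq : p < q) : ν p ≠ ν q := fun h => by
    have hmem : β q ∈ π.part (β p) :=
      mem_part_trans (hA.right_mem_part p) (h ▸ mem_part_symm (hA.right_mem_part q))
    have := hA.right_le hmem (hA.strictMono_left hpq)
    have := hA.left_lt_right q
    omega
  intro p q h
  by_contra hne
  rcases lt_or_gt_of_ne hne with hpq | hqp
  · exact hlt hpq h
  · exact hlt hqp h.symm

theorem right_mem_iff_left_mem (hA : IsArcEnumeration π β ν) {B : Finset ℕ} (hB : B ∈ π.parts)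
    (p : Fin k) : ν p ∈ B ↔ β p ∈ B :=
  (mem_iff_of_mem_part hB (hA.right_mem_part p)).symm

theorem sum_block_eq_add_sum_left (hA : IsArcEnumeration π β ν) {M : Type*} [AddCommMonoid M]
    (φ : ℕ → M) {B : Finset ℕ} (hB : B ∈ π.parts) {m : ℕ} (hm : IsGreatest (B : Set ℕ) m) :
    ∑ b ∈ B, φ b = φ m + ∑ p with β p ∈ B, φ (β p) := by
  have herase : B.erase m = image β {p | β p ∈ B} := by
    ext x
    simp only [mem_erase, mem_image, mem_filter, mem_univ, true_and]
    constructor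
    · rintro ⟨hne, hx⟩
      obtain ⟨p, rfl⟩ := hA.exists_left_eq (mem_part_of_mem_of_mem hB hx hm.1)
        (lt_of_le_of_ne (hm.2 hx) hne)
      exact ⟨p, hx, rfl⟩
    · rintro ⟨p, hp, rfl⟩
      have hν : ν p ≤ m := hm.2 ((hA.right_mem_iff_left_mem hB p).2 hp)
      exact ⟨((hA.left_lt_right p).trans_le hν).ne, hp⟩
  rw [← add_sum_erase B φ hm.1, herase, sum_image hA.strictMono_left.injective.injOn]

theorem sum_block_eq_add_sum_right (hA : IsArcEnumeration π β ν) {M : Type*} [AddCommMonoid M]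
    (φ : ℕ → M) {B : Finset ℕ} (hB : B ∈ π.parts) {m : ℕ} (hm : IsLeast (B : Set ℕ) m) :
    ∑ b ∈ B, φ b = φ m + ∑ p with β p ∈ B, φ (ν p) := by
  have herase : B.erase m = image ν {p | β p ∈ B} := by
    ext x
    simp only [mem_erase, mem_image, mem_filter, mem_univ, true_and]
    constructor
    · rintro ⟨hne, hx⟩
      obtain ⟨p, rfl, -, -⟩ := hA.exists_right_eq (mem_part_of_mem_of_mem hB hm.1 hx)
        (lt_of_le_of_ne (hm.2 hx) hne.symm)
      exact ⟨p, (hA.right_mem_iff_left_mem hB p).1 hx, rfl⟩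
    · rintro ⟨p, hp, rfl⟩
      have hβ : m ≤ β p := hm.2 hp
      exact ⟨(hβ.trans_lt (hA.left_lt_right p)).ne', (hA.right_mem_iff_left_mem hB p).2 hp⟩
  rw [← add_sum_erase B φ hm.1, herase, sum_image hA.right_injective.injOn]

theorem card_block (hA : IsArcEnumeration π β ν) {B : Finset ℕ} (hB : B ∈ π.parts) :
    #B = 1 + #{p | β p ∈ B} := by
  rw [card_eq_sum_ones,
    hA.sum_block_eq_add_sum_left _ hB (B.isGreatest_max' (π.nonempty_of_mem_parts hB)),
    card_eq_sum_ones]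

theorem card_parts_add (hA : IsArcEnumeration π β ν) : #π.parts + k = #G := by
  have hk : ∑ B ∈ π.parts, #{p | β p ∈ B} = k := by
    have hmaps : Set.MapsTo (fun p => π.part (β p)) (univ : Finset (Fin k)) π.parts :=
      fun p _ => π.part_mem.2 (hA.left_mem p)
    calc ∑ B ∈ π.parts, #{p | β p ∈ B} = ∑ B ∈ π.parts, #{p | π.part (β p) = B} :=
          sum_congr rfl fun B hB => by simp only [π.part_eq_iff_mem hB]
      _ = k := by rw [← card_eq_sum_card_fiberwise hmaps, card_fin]
  rw [← π.sum_card_parts, sum_congr rfl fun B hB => hA.card_block hB, sum_add_distrib, hk,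
    card_eq_sum_ones]

theorem left_ne_of_right_eq (hA : IsArcEnumeration π β ν) {f f' : Fin k → ℕ}
    (hf'_end : ∀ p, f' p = β p ∨ f' p = ν p) (hf : f.Injective)
    (himage : univ.image f = univ.image f') {p : Fin k} (hlt : ∀ q < p, f q = f' q)
    (hp' : f' p = ν p) : f p ≠ β p := by
  intro hp
  obtain ⟨q, -, hq⟩ := mem_image.1 (himage ▸ mem_image_of_mem f (mem_univ p))
  have hβν := hA.left_lt_right p
  have hne : q ≠ p := by rintro rfl; omega
  have hνq : ν q = β p := by
    rcases hf'_end q with h | h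
    · exact absurd (hA.strictMono_left.injective (h.symm.trans (hq.trans hp))) hne
    · exact h.symm.trans (hq.trans hp)
  have hqp : q < p := hA.strictMono_left.lt_iff_lt.1 (hνq ▸ hA.left_lt_right q)
  exact hne (hf ((hlt q hqp).trans hq))

theorem eq_of_image_eq (hA : IsArcEnumeration π β ν) {f f' : Fin k → ℕ}
    (hf_end : ∀ p, f p = β p ∨ f p = ν p) (hf'_end : ∀ p, f' p = β p ∨ f' p = ν p)
    (hf : f.Injective) (hf' : f'.Injective) (himage : univ.image f = univ.image f') : f = f' := by
  funext p
  induction p using WellFoundedLT.induction with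
  | ind p ih =>
    rcases hf_end p with hp | hp <;> rcases hf'_end p with hp' | hp'
    · rw [hp, hp']
    · exact absurd hp (hA.left_ne_of_right_eq hf'_end hf himage ih hp')
    · exact absurd hp'
        (hA.left_ne_of_right_eq hf_end hf' himage.symm (fun q hq => (ih q hq).symm) hp)
    · rw [hp, hp']

theorem end_mem_iff_left_mem (hA : IsArcEnumeration π β ν) {B : Finset ℕ} (hB : B ∈ π.parts)
    {f : Fin k → ℕ} (hf_end : ∀ p, f p = β p ∨ f p = ν p) (p : Fin k) : f p ∈ B ↔ β p ∈ B := by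
  rcases hf_end p with h | h
  · rw [h]
  · rw [h, hA.right_mem_iff_left_mem hB]

theorem card_block_sdiff_image (hA : IsArcEnumeration π β ν) {B : Finset ℕ} (hB : B ∈ π.parts)
    {f : Fin k → ℕ} (hf_end : ∀ p, f p = β p ∨ f p = ν p) (hf : f.Injective) :
    #(B \ univ.image f) = 1 := by
  have hinter : univ.image f ∩ B = image f {p | β p ∈ B} := by
    simp only [← filter_mem_eq_inter, filter_image, hA.end_mem_iff_left_mem hB hf_end]
  rw [card_sdiff, hinter, card_image_of_injective _ hf, hA.card_block hB, Nat.add_sub_cancel]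

theorem exists_ends_image_eq (hA : IsArcEnumeration π β ν) {I : Finset ℕ} (hI : #I = k)
    (hconc : ∀ B ∈ π.parts, #(B \ I) = 1) :
    ∃ f : Fin k → ℕ, (∀ p, f p = β p ∨ f p = ν p) ∧ f.Injective ∧ univ.image f = I := by
  -- In each block, `I` misses one element: take left ends before it and right ends from it on.
  let missed (p : Fin k) : Prop := ∃ c ≤ β p, c ∈ π.part (β p) ∧ c ∉ I
  let f (p : Fin k) : ℕ := if missed p then ν p else β p
  have hmissed {p q : Fin k} (hp : missed p) (h : ν p = β q) : missed q := by
    obtain ⟨c, hc_le, hc, hcI⟩ := hp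
    exact ⟨c, hc_le.trans (h ▸ hA.left_lt_right p).le,
      mem_part_trans (mem_part_symm (h ▸ hA.right_mem_part p)) hc, hcI⟩
  have hf : f.Injective := by
    intro p q hpq
    by_cases hp : missed p <;> by_cases hq : missed q <;> simp only [f, hp, hq, if_true, if_false]
      at hpq
    · exact hA.right_injective hpq
    · exact absurd (hmissed hp hpq) hq
    · exact absurd (hmissed hq hpq.symm) hp
    · exact hA.strictMono_left.injective hpq
  have hfI (p : Fin k) : f p ∈ I := by
    have hmem := hA.right_mem_part p
    by_cases hp : missed p <;> simp only [f, hp, if_true, if_false] <;> by_contra hI'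
    · obtain ⟨c, hc_le, hc, hcI⟩ := hp
      have hc_eq := card_le_one.1 (hconc _ (π.part_mem.2 (hA.left_mem p))).le
        c (mem_sdiff.2 ⟨hc, hcI⟩) (ν p) (mem_sdiff.2 ⟨hmem, hI'⟩)
      exact (hA.left_lt_right p).not_ge (hc_eq ▸ hc_le)
    · exact hp ⟨β p, le_rfl, π.mem_part_self.2 (hA.left_mem p), hI'⟩
  refine ⟨f, fun p => (ite_eq_or_eq ..).symm, hf, eq_of_subset_of_card_le ?_ ?_⟩
  · exact Finset.image_subset_iff.2 fun p _ => hfI p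
  · rw [hI, card_image_of_injective _ hf, card_fin]

theorem mem_representativeSets_ends (hA : IsArcEnumeration π β ν) {I : Finset ℕ} :
    I ∈ representativeSets (fun p => {β p, ν p}) ↔
      I ∈ G.powersetCard k ∧ ∀ B ∈ π.parts, #(B \ I) = 1 := by
  constructor
  · intro hI
    refine ⟨representativeSets_subset_powersetCard (fun p => ?_) hI, fun B hB => ?_⟩
    · exact insert_subset (hA.left_mem p) (singleton_subset_iff.2 (hA.right_mem p))
    · obtain ⟨f, hf_end, hf, rfl⟩ := mem_representativeSets.1 hI
      exact hA.card_block_sdiff_image hB (fun p => by simpa using hf_end p) hf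
  · rintro ⟨hI, hconc⟩
    obtain ⟨f, hf_end, hf, rfl⟩ := hA.exists_ends_image_eq (mem_powersetCard.1 hI).2 hconc
    exact mem_representativeSets.2 ⟨f, fun p => by simpa using hf_end p, hf, rfl⟩

end IsArcEnumeration

theorem mem_part_of_crossing {G : Finset ℕ} {π : Finpartition G} (hπ : NonCrossing π.parts)
    {a b c d : ℕ} (hab : a < b) (hbc : b < c) (hcd : c < d) (hac : c ∈ π.part a)
    (hbd : d ∈ π.part b) : b ∈ π.part a := by
  have ha := mem_of_mem_part hac
  have hb := mem_of_mem_part hbd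
  rw [hπ a b c d hab hbc hcd _ (π.part_mem.2 ha) _ (π.part_mem.2 hb) (π.mem_part_self.2 ha) hac
    (π.mem_part_self.2 hb) hbd]
  exact π.mem_part_self.2 hb

namespace IsArcEnumeration

variable {G : Finset ℕ} {π : Finpartition G} {k : ℕ} {β ν : Fin k → ℕ}

theorem right_le_of_left_mem_Ico (hA : IsArcEnumeration π β ν) (hπ : NonCrossing π.parts)
    {x y : ℕ} (h : y ∈ π.part x) {q : Fin k} (hq : β q ∈ Set.Ico x y) : ν q ≤ y := by
  by_contra! hlt
  have hmem : β q ∈ π.part x := by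
    rcases hq.1.eq_or_lt with hx | hx
    · exact hx ▸ π.mem_part_self.2 (mem_of_mem_part h)
    · exact mem_part_of_crossing hπ hx hq.2 hlt h (hA.right_mem_part q)
  exact hlt.not_ge (hA.right_le (mem_part_trans (mem_part_symm hmem) h) hq.2)

theorem le_left_of_right_mem_Ioc (hA : IsArcEnumeration π β ν) (hπ : NonCrossing π.parts)
    {x y : ℕ} (h : y ∈ π.part x) {q : Fin k} (hq : ν q ∈ Set.Ioc x y) : x ≤ β q := by
  by_contra! hlt
  have hmem : x ∈ π.part (β q) := by
    rcases hq.2.eq_or_lt with hy | hy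
    · exact mem_part_trans (hA.right_mem_part q) (hy ▸ mem_part_symm h)
    · exact mem_part_of_crossing hπ hlt hq.1 hy (hA.right_mem_part q) h
  exact hq.1.not_ge (hA.right_le hmem hlt)

theorem left_add_one_mem_part_self {a b : ℕ} {π : Finpartition (Icc a b)}
    (hA : IsArcEnumeration π β ν) (p : Fin k) : β p + 1 ∈ π.part (β p + 1) := by
  have hβ := mem_Icc.1 (hA.left_mem p)
  have hν := mem_Icc.1 (hA.right_mem p)
  have hβν := hA.left_lt_right p
  exact π.mem_part_self.2 (mem_Icc.2 ⟨by omega, by omega⟩)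

theorem sub_mem_span_arcs {R M : Type*} [CommRing R] [AddCommGroup M] [Module R M]
    (hA : IsArcEnumeration π β ν) (w : ℕ → M) {p : Fin k} {x y : ℕ} (h : y ∈ π.part x)
    (hxy : x ≤ y) (hp : β p < x) :
    w x - w y ∈ Submodule.span R ((fun q => w (β q) - w (ν q)) '' Set.Ioi p) := by
  induction y using Nat.strong_induction_on with
  | _ y ih =>
    rcases hxy.eq_or_lt with rfl | hlt
    · rw [sub_self]
      exact zero_mem _
    · obtain ⟨q, rfl, hxq, hq⟩ := hA.exists_right_eq h hlt
      rw [← sub_add_sub_cancel (w x) (w (β q))]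
      have hpq : p < q := hA.strictMono_left.lt_iff_lt.1 (hp.trans_le hxq)
      exact add_mem (ih _ (hA.left_lt_right q) hq hxq) (Submodule.subset_span ⟨q, hpq, rfl⟩)

theorem card_inversions_of_left (hA : IsArcEnumeration π β ν) {f : Fin k → ℕ}
    (hf_end : ∀ p, f p = β p ∨ f p = ν p) {p : Fin k} (hp : f p = β p) :
    #{q | p < q ∧ f q < f p} = 0 := by
  refine card_eq_zero.2 (filter_eq_empty_iff.2 fun q _ => not_and.2 fun hpq => ?_)
  have hβ := hA.strictMono_left hpq
  have hβν := hA.left_lt_right q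
  rcases hf_end q with h | h <;> omega

end IsArcEnumeration

/-- The first and last steps of the arcs in `Q`, where `z` encodes the step from `z` to `z + 1`. -/
def arcSteps {k : ℕ} (β ν : Fin k → ℕ) (Q : Finset (Fin k)) : Finset ℕ :=
  Q.image β ∪ Q.image (ν · - 1)

/-- The predecessors of the elements of the block of `β p + 1`. For a merged partition `(σ|σ̃)` this
block fills the gap under the arc with left end `β p`. -/
def innerIndices {G : Finset ℕ} (π : Finpartition G) {k : ℕ} (β : Fin k → ℕ) (p : Fin k) :
    Finset ℕ :=
  (π.part (β p + 1)).image (· - 1)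

section InnerIndices

variable {m k : ℕ} {π : Finpartition (Icc 1 m)} {β : Fin k → ℕ}

theorem mem_innerIndices {p : Fin k} {j : ℕ} :
    j ∈ innerIndices π β p ↔ j + 1 ∈ π.part (β p + 1) := by
  simp only [innerIndices, mem_image]
  constructor
  · rintro ⟨b, hb, rfl⟩
    rwa [Nat.sub_add_cancel (mem_Icc.1 (π.part_subset _ hb)).1]
  · exact fun hj => ⟨j + 1, hj, rfl⟩

theorem sum_innerIndices {M : Type*} [AddCommMonoid M] (φ : ℕ → M) (p : Fin k) :
    ∑ j ∈ innerIndices π β p, φ j = ∑ b ∈ π.part (β p + 1), φ (b - 1) := by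
  refine sum_image fun b hb b' hb' hbb' => ?_
  have hb := mem_Icc.1 (π.part_subset _ hb)
  have hb' := mem_Icc.1 (π.part_subset _ hb')
  omega

end InnerIndices

/-- `π` is the merged partition `(σ|σ̃)` of `{1, …, 2n}` for a non-crossing partition `σ` of the odd
numbers and its dual `σ̃`. The parity of the elements of a block tells whether it belongs to `σ` or
to `σ̃`. -/
structure IsKrewerasMerge {n : ℕ} (π : Finpartition (Icc 1 (2 * n))) : Prop where
  nonCrossing : NonCrossing π.parts
  mod_two_eq : ∀ {x y}, y ∈ π.part x → x % 2 = y % 2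
  card_parts : #π.parts = n + 1

namespace IsKrewerasMerge

variable {n k : ℕ} {π : Finpartition (Icc 1 (2 * n))} {β ν : Fin k → ℕ}

theorem card_arcs_add_one (hπ : IsKrewerasMerge π) (hA : IsArcEnumeration π β ν) :
    k + 1 = n := by
  have := hA.card_parts_add
  rw [hπ.card_parts, Nat.card_Icc] at this
  omega

theorem left_add_one_ne_right (hπ : IsKrewerasMerge π) (hA : IsArcEnumeration π β ν)
    (p q : Fin k) : β p + 1 ≠ ν q := by
  intro h
  have hβν := hA.left_lt_right p
  have hβνq := hA.left_lt_right q
  have hp := hπ.mod_two_eq (hA.right_mem_part p)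
  have hq := hπ.mod_two_eq (hA.right_mem_part q)
  have hcross := hπ.mod_two_eq (mem_part_of_crossing hπ.nonCrossing (a := β q) (b := β p)
    (by omega) (by omega) (by omega) (hA.right_mem_part q) (hA.right_mem_part p))
  omega

theorem left_add_one_lt_right (hπ : IsKrewerasMerge π) (hA : IsArcEnumeration π β ν)
    (p : Fin k) : β p + 1 < ν p :=
  lt_of_le_of_ne (hA.left_lt_right p) (hπ.left_add_one_ne_right hA p p)

theorem card_arcSteps (hπ : IsKrewerasMerge π) (hA : IsArcEnumeration π β ν)
    (Q : Finset (Fin k)) : #(arcSteps β ν Q) = 2 * #Q := by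
  have hβν := hA.left_lt_right
  have hdisj : Disjoint (Q.image β) (Q.image (ν · - 1)) := by
    simp only [disjoint_left, mem_image, not_exists, not_and, forall_exists_index, and_imp]
    rintro _ p - rfl q - hq
    have := hπ.left_add_one_ne_right hA p q
    have := hβν q
    omega
  have hinj : (ν · - 1).Injective := fun p q hpq => hA.right_injective <| by
    have := hβν p
    have := hβν q
    simp only at hpq
    omega
  rw [arcSteps, card_union_of_disjoint hdisj, card_image_of_injective _ hinj,
    card_image_of_injective _ hA.strictMono_left.injective, two_mul]

theorem Ico_inter_arcSteps (hπ : IsKrewerasMerge π) (hA : IsArcEnumeration π β ν) {x y : ℕ}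
    (h : y ∈ π.part x) :
    Ico x y ∩ arcSteps β ν univ = arcSteps β ν {q | x ≤ β q ∧ β q < y} := by
  have hright (q : Fin k) : ν q - 1 ∈ Ico x y ↔ x ≤ β q ∧ β q < y := by
    have hβν := hA.left_lt_right q
    rw [mem_Ico]
    constructor
    · intro hq
      exact ⟨hA.le_left_of_right_mem_Ioc hπ.nonCrossing h ⟨by omega, by omega⟩, by omega⟩
    · intro hq
      have := hA.right_le_of_left_mem_Ico hπ.nonCrossing h hq
      omega
  rw [arcSteps, inter_comm, ← filter_mem_eq_inter, filter_union, filter_image, filter_image]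
  simp only [hright, mem_Ico]
  rfl

theorem Ico_subset_arcSteps (hπ : IsKrewerasMerge π) (hA : IsArcEnumeration π β ν) {x y : ℕ}
    (h : y ∈ π.part x) (hxy : x ≤ y) : Ico x y ⊆ arcSteps β ν univ := by
  have hx := mem_Icc.1 (mem_of_mem_part h)
  have hy := mem_Icc.1 (π.part_subset _ h)
  have hall : arcSteps β ν univ ⊆ Ico 1 (2 * n) := by
    refine union_subset (Finset.image_subset_iff.2 fun p _ => mem_Ico.2 ?_)
      (Finset.image_subset_iff.2 fun p _ => mem_Ico.2 ?_) <;>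
    · have hβ := mem_Icc.1 (hA.left_mem p)
      have hν := mem_Icc.1 (hA.right_mem p)
      have hβν := hA.left_lt_right p
      omega
  -- A single step is missed overall, and between `x` and `y` the number of missed steps is even.
  have hmissed_le : #(Ico x y \ arcSteps β ν univ) ≤ #(Ico 1 (2 * n) \ arcSteps β ν univ) :=
    card_le_card (sdiff_subset_sdiff (Ico_subset_Ico hx.1 hy.2) le_rfl)
  have hk := hπ.card_arcs_add_one hA
  rw [card_sdiff_of_subset hall, hπ.card_arcSteps hA, card_fin, Nat.card_Ico] at hmissed_le
  have hcard := card_sdiff_add_card_inter (Ico x y) (arcSteps β ν univ)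
  rw [hπ.Ico_inter_arcSteps hA h, hπ.card_arcSteps hA, Nat.card_Ico] at hcard
  have hparity := hπ.mod_two_eq h
  rw [← sdiff_eq_empty_iff_subset, ← card_eq_zero]
  omega

theorem two_mul_card_left_mem_Ico (hπ : IsKrewerasMerge π) (hA : IsArcEnumeration π β ν)
    {x y : ℕ} (h : y ∈ π.part x) (hxy : x ≤ y) : 2 * #{q | x ≤ β q ∧ β q < y} + x = y := by
  rw [← hπ.card_arcSteps hA, ← hπ.Ico_inter_arcSteps hA h,
    inter_eq_left.2 (hπ.Ico_subset_arcSteps hA h hxy), Nat.card_Ico, Nat.sub_add_cancel hxy]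

theorem mem_Ioo_of_mem_part_left_add_one (hπ : IsKrewerasMerge π) (hA : IsArcEnumeration π β ν)
    {p : Fin k} {y : ℕ} (h : y ∈ π.part (β p + 1)) : y ∈ Set.Ioo (β p) (ν p) := by
  have hlt := hπ.left_add_one_lt_right hA p
  have hp := hπ.mod_two_eq (hA.right_mem_part p)
  have hy := hπ.mod_two_eq h
  constructor <;> by_contra! hle
  · have := hπ.mod_two_eq (mem_part_of_crossing hπ.nonCrossing (a := y) (b := β p) (by omega)
      (by omega) hlt (mem_part_symm h) (hA.right_mem_part p))
    omega
  · have := hπ.mod_two_eq (mem_part_of_crossing hπ.nonCrossing (b := β p + 1) (by omega) hlt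
      (by omega) (hA.right_mem_part p) h)
    omega

theorem right_sub_one_mem_part (hπ : IsKrewerasMerge π) (hA : IsArcEnumeration π β ν)
    (p : Fin k) : ν p - 1 ∈ π.part (β p + 1) := by
  -- The step leaving the last element `z` of the block can only be the last step of the arc `p`.
  obtain ⟨z, hz, hmax⟩ := exists_max_image (π.part (β p + 1)) id
    ⟨_, hA.left_add_one_mem_part_self p⟩
  simp only [id] at hmax
  obtain ⟨hβz, hzν⟩ := hπ.mem_Ioo_of_mem_part_left_add_one hA hz
  have hz_step : z ∈ arcSteps β ν univ :=
    hπ.Ico_subset_arcSteps hA (hA.right_mem_part p) (hA.left_lt_right p).le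
      (mem_Ico.2 ⟨hβz.le, hzν⟩)
  rcases mem_union.1 hz_step with hz_step | hz_step <;> obtain ⟨r, -, hr⟩ := mem_image.1 hz_step
  · subst hr
    exact absurd (hmax _ (mem_part_trans hz (hA.right_mem_part r))) (hA.left_lt_right r).not_ge
  · have hβνr := hA.left_lt_right r
    have hr_mod := hπ.mod_two_eq (hA.right_mem_part r)
    have hz_mod := hπ.mod_two_eq hz
    have hle : β p ≤ β r := hA.le_left_of_right_mem_Ioc hπ.nonCrossing (hA.right_mem_part p)
      ⟨by omega, by omega⟩
    rcases hle.eq_or_lt with heq | hlt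
    · rwa [hA.strictMono_left.injective heq, hr, ← hA.strictMono_left.injective heq]
    · have := hπ.mod_two_eq (mem_part_of_crossing hπ.nonCrossing (a := β p + 1) (b := β r)
        (by omega) (by omega) (by omega) hz (hA.right_mem_part r))
      omega

theorem two_mul_card_left_lt (hπ : IsKrewerasMerge π) (hA : IsArcEnumeration π β ν)
    {p : Fin k} {y : ℕ} (h : y ∈ π.part (β p + 1)) : 2 * #{q | p < q ∧ β q < y} + β p + 1 = y := by
  have hcard := hπ.two_mul_card_left_mem_Ico hA h (hπ.mem_Ioo_of_mem_part_left_add_one hA h).1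
  simpa only [Nat.succ_le_iff, hA.strictMono_left.lt_iff_lt, ← add_assoc] using hcard

theorem innerIndices_subset (hπ : IsKrewerasMerge π) (hA : IsArcEnumeration π β ν) (p : Fin k) :
    innerIndices π β p ⊆ Icc 1 (2 * n - 2) := by
  intro j hj
  have hj := hπ.mem_Ioo_of_mem_part_left_add_one hA (mem_innerIndices.1 hj)
  have hβ := mem_Icc.1 (hA.left_mem p)
  have hν := mem_Icc.1 (hA.right_mem p)
  simp only [Set.mem_Ioo] at hj
  exact mem_Icc.2 (by omega)

theorem pairwise_disjoint_innerIndices (hπ : IsKrewerasMerge π) (hA : IsArcEnumeration π β ν) :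
    Pairwise (Function.onFun Disjoint (innerIndices π β)) := by
  refine (pairwise_disjoint_on _).2 fun p q hpq => disjoint_left.2 fun j hjp hjq => ?_
  have hmem : β q + 1 ∈ π.part (β p + 1) :=
    mem_part_trans (mem_innerIndices.1 hjp) (mem_part_symm (mem_innerIndices.1 hjq))
  have hle := hA.right_le_of_left_mem_Ico hπ.nonCrossing hmem
    ⟨hA.strictMono_left hpq, Nat.lt_succ_self _⟩
  exact (hπ.left_add_one_lt_right hA q).not_ge hle

variable {R M N : Type*} [CommRing R] [AddCommGroup M] [Module R M] [AddCommGroup N] [Module R N]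
  (g : M [⋀^Fin k]→ₗ[R] N)

theorem sum_innerIndices_sub_eq (hπ : IsKrewerasMerge π) (hA : IsArcEnumeration π β ν)
    (w : ℕ → M) (p : Fin k) :
    ∑ j ∈ innerIndices π β p, (w j - w (j + 2)) = w (β p) - w (ν p) +
      ∑ q with β q ∈ π.part (β p + 1), (w (ν q - 1) - w (β q + 1)) := by
  have hself := hA.left_add_one_mem_part_self p
  have hB : π.part (β p + 1) ∈ π.parts := π.part_mem.2 (π.part_subset _ hself)
  have hleast : IsLeast (π.part (β p + 1) : Set ℕ) (β p + 1) :=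
    ⟨hself, fun _ hy => (hπ.mem_Ioo_of_mem_part_left_add_one hA hy).1⟩
  have hgreatest : IsGreatest (π.part (β p + 1) : Set ℕ) (ν p - 1) :=
    ⟨hπ.right_sub_one_mem_part hA p,
      fun _ hy => Nat.le_sub_one_of_lt (hπ.mem_Ioo_of_mem_part_left_add_one hA hy).2⟩
  have hshift : ∑ j ∈ innerIndices π β p, w (j + 2) = ∑ b ∈ π.part (β p + 1), w (b + 1) := by
    rw [sum_innerIndices fun j => w (j + 2)]
    refine sum_congr rfl fun b hb => ?_
    rw [← Nat.sub_add_cancel (mem_Icc.1 (π.part_subset _ hb)).1]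
    rfl
  rw [sum_sub_distrib, hshift, sum_innerIndices, hA.sum_block_eq_add_sum_right _ hB hleast,
    hA.sum_block_eq_add_sum_left _ hB hgreatest, sum_sub_distrib,
    Nat.sub_add_cancel (Nat.one_le_of_lt (hA.left_lt_right p)), Nat.add_sub_cancel]
  abel

theorem map_sum_innerIndices_eq_map_arcs (hπ : IsKrewerasMerge π) (hA : IsArcEnumeration π β ν)
    (w : ℕ → M) :
    g (fun p => ∑ j ∈ innerIndices π β p, (w j - w (j + 2))) =
      g (fun p => w (β p) - w (ν p)) := by
  refine map_eq_map_of_sub_mem_span_Ioi g _ _ fun p => ?_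
  rw [hπ.sum_innerIndices_sub_eq hA, add_sub_cancel_left]
  refine sum_mem fun q hq => ?_
  have hβ := (hπ.mem_Ioo_of_mem_part_left_add_one hA (mem_filter.1 hq).2).1
  rw [← neg_sub]
  exact neg_mem (hA.sub_mem_span_arcs w (hπ.right_sub_one_mem_part hA q)
    (Nat.le_sub_one_of_lt (hπ.left_add_one_lt_right hA q)) (hβ.trans (Nat.lt_succ_self _)))

theorem card_inversions_of_right (hπ : IsKrewerasMerge π) (hA : IsArcEnumeration π β ν)
    {f : Fin k → ℕ} (hf_end : ∀ p, f p = β p ∨ f p = ν p) (hf : f.Injective) {p : Fin k}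
    (hp : f p = ν p) : 2 * #{q | p < q ∧ f q < f p} + β p + 2 = ν p := by
  have hlt (q : Fin k) (hpq : p < q) : f q < f p ↔ β q < ν p - 1 := by
    have hβνq := hA.left_lt_right q
    have hne : f q ≠ f p := hf.ne hpq.ne'
    have hne_right := hπ.left_add_one_ne_right hA q p
    have hnested (h : β q < ν p) : ν q ≤ ν p :=
      hA.right_le_of_left_mem_Ico hπ.nonCrossing (hA.right_mem_part p)
        ⟨(hA.strictMono_left hpq).le, h⟩
    rcases hf_end q with h | h <;> omega
  have hcard := hπ.two_mul_card_left_lt hA (hπ.right_sub_one_mem_part hA p)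
  rw [filter_congr fun q _ => and_congr_right (hlt q)]
  omega

theorem card_inversions_of_mem_innerIndices (hπ : IsKrewerasMerge π)
    (hA : IsArcEnumeration π β ν) {f : Fin k → ℕ} (hf : ∀ p, f p ∈ innerIndices π β p)
    (p : Fin k) : 2 * #{q | p < q ∧ f q < f p} + β p = f p := by
  have hf (q : Fin k) : f q + 1 ∈ π.part (β q + 1) := mem_innerIndices.1 (hf q)
  have hlt (q : Fin k) (hpq : p < q) : f q < f p ↔ β q < f p + 1 := by
    obtain ⟨hβ, hν⟩ := hπ.mem_Ioo_of_mem_part_left_add_one hA (hf q)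
    have hnested (h : β q < f p + 1) : ν q ≤ f p + 1 :=
      hA.right_le_of_left_mem_Ico hπ.nonCrossing (hf p) ⟨hA.strictMono_left hpq, h⟩
    omega
  have hcard := hπ.two_mul_card_left_lt hA (hf p)
  rw [filter_congr fun q _ => and_congr_right (hlt q)]
  omega

theorem map_arcs_eq_sum_sortedWedge (hπ : IsKrewerasMerge π) (hA : IsArcEnumeration π β ν)
    (u : ℕ → M) :
    g (fun p => (-1 : R) ^ (β p / 2) •
        ((-1 : R) ^ (β p / 2) • u (β p) - (-1 : R) ^ (ν p / 2) • u (ν p))) =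
      ∑ I ∈ representativeSets (fun p => {β p, ν p}), sortedWedge g u I := by
  rw [← map_sum_eq_sum_representativeSets g u _
    (fun p j => β p / 2 + j / 2 + if j = β p then 0 else 1)]
  · congr 1 with p
    rw [sum_pair (hA.left_lt_right p).ne, if_pos rfl, if_neg (hA.left_lt_right p).ne']
    simp only [pow_add, mul_smul, smul_sub, pow_zero, pow_one, one_smul, neg_smul, smul_neg,
      ← sub_eq_add_neg]
  · intro f hf_end hf p
    have hf_end (q : Fin k) : f q = β q ∨ f q = ν q := by simpa using hf_end q
    rcases hf_end p with hp | hp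
    · rw [hA.card_inversions_of_left hf_end hp, hp, if_pos rfl]
      exact ⟨_, rfl⟩
    · have hinv := hπ.card_inversions_of_right hA hf_end hf hp
      rw [hp] at hinv ⊢
      rw [if_neg (hA.left_lt_right p).ne', Nat.even_iff]
      omega
  · intro f f' hf_end hf'_end hf hf'
    exact hA.eq_of_image_eq (fun p => by simpa using hf_end p) (fun p => by simpa using hf'_end p)
      hf hf'

theorem map_innerIndices_eq_sum_sortedWedge (hπ : IsKrewerasMerge π)
    (hA : IsArcEnumeration π β ν) (u : ℕ → M) :
    g (fun p => (-1 : R) ^ (β p / 2) • ∑ j ∈ innerIndices π β p, (-1 : R) ^ (j / 2) • u j) =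
      ∑ J ∈ representativeSets (innerIndices π β), sortedWedge g u J := by
  rw [← map_sum_eq_sum_representativeSets g u _ (fun p j => β p / 2 + j / 2)]
  · simp only [smul_sum, smul_smul, pow_add]
  · intro f hf _ p
    have hinv := hπ.card_inversions_of_mem_innerIndices hA hf p
    rw [Nat.even_iff]
    omega
  · intro f f' hf hf' _ _
    exact eq_of_image_eq_of_pairwise_disjoint (hπ.pairwise_disjoint_innerIndices hA) hf hf'

theorem sum_sortedWedge_ends_eq_sum_innerIndices (hπ : IsKrewerasMerge π)
    (hA : IsArcEnumeration π β ν) (u : ℕ → M) :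
    ∑ I ∈ representativeSets (fun p => {β p, ν p}), sortedWedge g u I =
      ∑ J ∈ representativeSets (innerIndices π β), sortedWedge g (fun j => u j + u (j + 2)) J := by
  let w (j : ℕ) : M := (-1 : R) ^ (j / 2) • u j
  have hw (j : ℕ) : (-1 : R) ^ (j / 2) • (u j + u (j + 2)) = w j - w (j + 2) := by
    simp only [w, Nat.add_div_right j two_pos, pow_succ, mul_neg_one, neg_smul, smul_add,
      sub_neg_eq_add]
  rw [← hπ.map_arcs_eq_sum_sortedWedge g hA, ← hπ.map_innerIndices_eq_sum_sortedWedge g hA]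
  simp only [hw]
  rw [← AlternatingMap.coe_multilinearMap, MultilinearMap.map_smul_univ,
    MultilinearMap.map_smul_univ, AlternatingMap.coe_multilinearMap,
    hπ.map_sum_innerIndices_eq_map_arcs g hA w]

end IsKrewerasMerge

theorem mem_oddSet {n x : ℕ} : x ∈ oddSet n ↔ x ∈ Icc 1 (2 * n) ∧ x % 2 = 1 := by
  simp only [oddSet, mem_image, mem_range, mem_Icc]
  exact ⟨by rintro ⟨k, hk, rfl⟩; omega, fun h => ⟨x / 2, by omega⟩⟩

theorem mem_evenSet {n x : ℕ} : x ∈ evenSet n ↔ x ∈ Icc 1 (2 * n) ∧ x % 2 = 0 := by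
  simp only [evenSet, mem_image, mem_range, mem_Icc]
  exact ⟨by rintro ⟨k, hk, rfl⟩; omega, fun h => ⟨x / 2 - 1, by omega⟩⟩

theorem oddSet_union_evenSet (n : ℕ) : oddSet n ∪ evenSet n = Icc 1 (2 * n) := by
  ext x
  rw [mem_union, mem_oddSet, mem_evenSet, ← and_or_left,
    and_iff_left (Nat.mod_two_eq_zero_or_one x).symm]

theorem disjoint_oddSet_evenSet (n : ℕ) : Disjoint (oddSet n) (evenSet n) :=
  disjoint_left.2 fun x hodd heven => by
    have := (mem_oddSet.1 hodd).2
    have := (mem_evenSet.1 heven).2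
    omega

theorem exists_finpartition_parts_eq {G : Finset ℕ} {P : Finset (Finset ℕ)}
    (hP : IsPartitionOf G P) : ∃ π : Finpartition G, π.parts = P :=
  ⟨.ofExistsUnique P hP.2.1 hP.2.2 fun h => not_nonempty_empty (hP.1 ∅ h), rfl⟩

theorem isPartitionOf_union {G H : Finset ℕ} {P Q : Finset (Finset ℕ)} (hP : IsPartitionOf G P)
    (hQ : IsPartitionOf H Q) (hGH : Disjoint G H) : IsPartitionOf (G ∪ H) (P ∪ Q) := by
  refine ⟨fun B hB => (mem_union.1 hB).elim (hP.1 B) (hQ.1 B), fun B hB => ?_, fun x hx => ?_⟩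
  · exact (mem_union.1 hB).elim (fun h => (hP.2.1 B h).trans subset_union_left)
      fun h => (hQ.2.1 B h).trans subset_union_right
  · rcases mem_union.1 hx with hx | hx
    · obtain ⟨B, ⟨hB, hxB⟩, hunique⟩ := hP.2.2 x hx
      refine ⟨B, ⟨mem_union_left _ hB, hxB⟩, fun C ⟨hC, hxC⟩ => hunique C ⟨?_, hxC⟩⟩
      exact (mem_union.1 hC).resolve_right fun h => disjoint_left.1 hGH hx (hQ.2.1 C h hxC)
    · obtain ⟨B, ⟨hB, hxB⟩, hunique⟩ := hQ.2.2 x hx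
      refine ⟨B, ⟨mem_union_right _ hB, hxB⟩, fun C ⟨hC, hxC⟩ => hunique C ⟨?_, hxC⟩⟩
      exact (mem_union.1 hC).resolve_left fun h => disjoint_left.1 hGH (hP.2.1 C h hxC) hx

theorem disjoint_of_isPartitionOf {G H : Finset ℕ} {P Q : Finset (Finset ℕ)}
    (hP : IsPartitionOf G P) (hQ : IsPartitionOf H Q) (hGH : Disjoint G H) : Disjoint P Q :=
  disjoint_left.2 fun B hBP hBQ => by
    obtain ⟨x, hx⟩ := hP.1 B hBP
    exact disjoint_left.1 hGH (hP.2.1 B hBP hx) (hQ.2.1 B hBQ hx)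

theorem exists_isKrewerasMerge {n : ℕ} {σ σd : Finset (Finset ℕ)} (h : IsNCPair n σ σd) :
    ∃ π : Finpartition (Icc 1 (2 * n)), π.parts = σ ∪ σd ∧ IsKrewerasMerge π := by
  obtain ⟨hσ, -, hσd, -, hNC, hcard⟩ := h
  have hdisj := disjoint_oddSet_evenSet n
  obtain ⟨π, hparts⟩ := exists_finpartition_parts_eq
    (oddSet_union_evenSet n ▸ isPartitionOf_union hσ hσd hdisj)
  refine ⟨π, hparts, hparts ▸ hNC, fun {x y} hxy => ?_, ?_⟩
  · obtain ⟨B, hB, hy, hx⟩ := π.mem_part_iff_exists.1 hxy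
    rcases mem_union.1 (hparts ▸ hB) with hB | hB
    · rw [(mem_oddSet.1 (hσ.2.1 B hB hx)).2, (mem_oddSet.1 (hσ.2.1 B hB hy)).2]
    · rw [(mem_evenSet.1 (hσd.2.1 B hB hx)).2, (mem_evenSet.1 (hσd.2.1 B hB hy)).2]
  · rw [hparts, card_union_of_disjoint (disjoint_of_isPartitionOf hσ hσd hdisj), hcard]

theorem concordance_vector_coeffs_zero_one_general {R M N : Type*} [CommRing R] [AddCommGroup M]
    [Module R M] [AddCommGroup N] [Module R N] {n : ℕ} (g : M [⋀^Fin (n - 1)]→ₗ[R] N) (u : ℕ → M)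
    {σ σd : Finset (Finset ℕ)} (h : IsNCPair n σ σd) :
    ∃ c : Finset ℕ → R, (∀ J, c J = 0 ∨ c J = 1) ∧
      ∑ I ∈ ((Icc 1 (2 * n)).powersetCard (n - 1)).filter (ConcordantWith σ σd),
          sortedWedge g u I =
        ∑ J ∈ (Icc 1 (2 * n - 2)).powersetCard (n - 1),
          c J • sortedWedge g (fun j => u j + u (j + 2)) J := by
  obtain ⟨π, hparts, hπ⟩ := exists_isKrewerasMerge h
  obtain ⟨k, β, ν, hA⟩ := exists_isArcEnumeration π
  obtain rfl : k = n - 1 := Nat.eq_sub_of_add_eq (hπ.card_arcs_add_one hA)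
  have hconc : ((Icc 1 (2 * n)).powersetCard (n - 1)).filter (ConcordantWith σ σd) =
      representativeSets fun p => {β p, ν p} := by
    ext I
    rw [mem_filter, hA.mem_representativeSets_ends, hparts, ConcordantWith]
  have hsub := representativeSets_subset_powersetCard (hπ.innerIndices_subset hA)
  refine ⟨fun J => if J ∈ representativeSets (innerIndices π β) then 1 else 0,
    fun J => (ite_eq_or_eq ..).symm, ?_⟩
  rw [hconc, hπ.sum_sortedWedge_ends_eq_sum_innerIndices g hA]
  simp only [ite_smul, one_smul, zero_smul]
  rw [sum_ite_mem, inter_eq_right.2 hsub]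

theorem concordance_vector_coeffs_zero_one (n : ℕ) (hn : 2 ≤ n)
    (σ σd : Finset (Finset ℕ)) (h : IsNCPair n σ σd) :
    ∃ c : Finset ℕ → ℝ, (∀ J, c J = 0 ∨ c J = 1) ∧
      concVec n σ σd =
        ∑ J ∈ (Finset.Icc 1 (2 * n - 2)).powersetCard (n - 1),
          c J • vFinsetWedge n (n - 1) J :=
  concordance_vector_coeffs_zero_one_general (ExteriorAlgebra.ιMulti ℝ (n - 1)) (stdE n) h
end

section
/- (Action of the Lam generators on the concordance basis.) For every t ∈ ℝ, every i ∈ {1,…,2n}, and every non-crossing partition σ of {1̄,…,n̄}: if i is isolated in σ then (⋀^{n-1}U_i(t))(w_σ) = w_σ, and if i is not isolated in σ then (⋀^{n-1}U_i(t))(w_σ) = w_σ + t·w_{g_iσ}. Equivalently, each generator 𝔲_i of the Lam algebra maps a concordance vector either to another concordance vector or to zero. -/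
open scoped Classical

noncomputable section

open Matrix

/-- `i` (for odd `i = 2k-1`) is isolated in `σ` if `{k̄}` is a singleton block of `σ`;
for even `i = 2k`, `i` is isolated in `σ` if `{k̃}` is a singleton block of the dual `σd`. -/
def IsolatedIn (σ σd : Finset (Finset ℕ)) (i : ℕ) : Prop :=
  if i % 2 = 1 then {i} ∈ σ else {i} ∈ σd

/-- Remove `i` from its block and add `{i}` as a singleton block. -/
def isolate (P : Finset (Finset ℕ)) (i : ℕ) : Finset (Finset ℕ) :=
  insert {i} (P.image fun B => B.erase i)

/-- The Lam algebra generator `𝔲_i` (1-indexed): `𝔲_i = E_{i,i+1} + E_{i,i-1}` for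
`2 ≤ i ≤ 2n-1`, `𝔲_1 = E_{1,2} + (-1)^n E_{1,2n}`, `𝔲_{2n} = E_{2n,2n-1} + (-1)^n E_{2n,1}`. -/
def frakU (n i : ℕ) : Matrix (Fin (2 * n)) (Fin (2 * n)) ℝ :=
  fun a b =>
    if i = 1 then
      (if a.val = 0 ∧ b.val = 1 then (1 : ℝ) else 0) +
        (if a.val = 0 ∧ b.val = 2 * n - 1 then (-1 : ℝ) ^ n else 0)
    else if i = 2 * n then
      (if a.val = 2 * n - 1 ∧ b.val = 2 * n - 2 then (1 : ℝ) else 0) +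
        (if a.val = 2 * n - 1 ∧ b.val = 0 then (-1 : ℝ) ^ n else 0)
    else
      (if a.val + 1 = i ∧ b.val = i then (1 : ℝ) else 0) +
        (if a.val + 1 = i ∧ b.val + 2 = i then (1 : ℝ) else 0)

/-- The Lam group generator `u_i(t) = I + t·𝔲_i`. -/
def lamGen (n i : ℕ) (t : ℝ) : Matrix (Fin (2 * n)) (Fin (2 * n)) ℝ :=
  1 + t • frakU n i

/-- The linear map `U_i(t) : ℝ^{2n} → ℝ^{2n}`, `v ↦ u_i(t)ᵀ v` (the action of `u_i(t)` on
row vectors by right multiplication). -/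
def lamU (n i : ℕ) (t : ℝ) : (Fin (2 * n) → ℝ) →ₗ[ℝ] (Fin (2 * n) → ℝ) :=
  ((lamGen n i t)ᵀ).mulVecLin

end

/-!
Fix `i`, let `A` be the one of `σ`, `σ̃` whose ground set contains `i`, and let `C` be the other.
No block of `A` crosses a block of `C`, so the points of a block of `C` lie in a common arc of the
circle cut at any block of `A`. Two partitions which do not cross each other have at least `n + 1`
blocks together, so `|A| + |C| = n + 1` forces `C` to be the coarsest partition not crossed by `A`.
Hence isolating `i` in `A` merges the blocks `D` and `E` of `C` which contain the cyclic
neighbours `p` and `q` of `i`, and `D ≠ E` unless `i` was already isolated.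

`U_i(t)` fixes all basis vectors except `e_i`, which it sends to `e_i + t (± e_p ± e_q)`; thus it
fixes `e_I` when `i ∉ I`. When `i ∈ I` it adds `t e_{I - i + p}` and `t e_{I - i + q}`, where terms
with a repeated index vanish and the signs `(-1) ^ n` cancel those of the reordering.
For `I` concordant with `(A, C)`, the sets `I - i + p` (resp. `I - i + q`) arising in this way are
exactly the sets concordant with the new pair which contain `D` (resp. `E`). Since such a set omits
exactly one point of `D ∪ E`, it contains exactly one of `D` and `E`, so the added terms sum to
`t w_{g_i σ}`.
-/

section Partitions

variable {G H : Finset ℕ} {P Q : Finset (Finset ℕ)} {B D E : Finset ℕ} {x : ℕ}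

theorem IsPartitionOf.exists_mem (hP : IsPartitionOf G P) (hx : x ∈ G) : ∃ B ∈ P, x ∈ B := by
  obtain ⟨B, hB, -⟩ := hP.2.2 x hx
  exact ⟨B, hB⟩

theorem IsPartitionOf.mem_ground (hP : IsPartitionOf G P) (hB : B ∈ P) (hx : x ∈ B) : x ∈ G :=
  hP.2.1 B hB hx

theorem IsPartitionOf.eq_of_mem (hP : IsPartitionOf G P) (hB : B ∈ P) (hD : D ∈ P)
    (hxB : x ∈ B) (hxD : x ∈ D) : B = D :=
  (hP.2.2 x (hP.mem_ground hB hxB)).unique ⟨hB, hxB⟩ ⟨hD, hxD⟩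

theorem IsPartitionOf.disjoint (hP : IsPartitionOf G P) (hB : B ∈ P) (hD : D ∈ P)
    (hBD : B ≠ D) : Disjoint B D :=
  Finset.disjoint_left.2 fun _ hxB hxD => hBD (hP.eq_of_mem hB hD hxB hxD)

theorem IsPartitionOf.union (hP : IsPartitionOf G P) (hQ : IsPartitionOf H Q)
    (hGH : Disjoint G H) : IsPartitionOf (G ∪ H) (P ∪ Q) := by
  have hPQ : ∀ B ∈ P, ∀ D ∈ Q, ∀ x ∈ B, x ∉ D := fun B hB D hD x hxB hxD =>
    Finset.disjoint_left.1 hGH (hP.mem_ground hB hxB) (hQ.mem_ground hD hxD)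
  refine ⟨fun B hB => ?_, fun B hB => ?_, fun x hx => ?_⟩
  · exact (Finset.mem_union.1 hB).elim (hP.1 B) (hQ.1 B)
  · exact (Finset.mem_union.1 hB).elim
      (fun h => (hP.2.1 B h).trans Finset.subset_union_left)
      (fun h => (hQ.2.1 B h).trans Finset.subset_union_right)
  · have hex : ∃ B ∈ P ∪ Q, x ∈ B := by
      rcases Finset.mem_union.1 hx with hx | hx
      · obtain ⟨B, hB, hxB⟩ := hP.exists_mem hx
        exact ⟨B, Finset.mem_union_left _ hB, hxB⟩
      · obtain ⟨B, hB, hxB⟩ := hQ.exists_mem hx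
        exact ⟨B, Finset.mem_union_right _ hB, hxB⟩
    obtain ⟨B, hB, hxB⟩ := hex
    refine ⟨B, ⟨hB, hxB⟩, fun D ⟨hD, hxD⟩ => ?_⟩
    rcases Finset.mem_union.1 hB with hB | hB <;> rcases Finset.mem_union.1 hD with hD | hD
    · exact hP.eq_of_mem hD hB hxD hxB
    · exact (hPQ B hB D hD x hxB hxD).elim
    · exact (hPQ D hD B hB x hxD hxB).elim
    · exact hQ.eq_of_mem hD hB hxD hxB

theorem IsPartitionOf.eq_of_forall_eq_of_mem (hP : IsPartitionOf G P) (hQ : IsPartitionOf G Q)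
    (h : ∀ B ∈ P, ∀ D ∈ Q, ∀ x ∈ B, x ∈ D → B = D) : P = Q := by
  ext B
  constructor
  · intro hB
    obtain ⟨x, hx⟩ := hP.1 B hB
    obtain ⟨D, hD, hxD⟩ := hQ.exists_mem (hP.mem_ground hB hx)
    rwa [h B hB D hD x hx hxD]
  · intro hB
    obtain ⟨x, hx⟩ := hQ.1 B hB
    obtain ⟨D, hD, hxD⟩ := hP.exists_mem (hQ.mem_ground hB hx)
    rwa [← h D hD B hB x hxD hx]

theorem IsPartitionOf.succ_le_two_mul_card {m : ℕ} (hP : IsPartitionOf (Finset.Icc 1 m) P)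
    (hm : 1 ≤ m)
    (h : ∀ x, ∀ B ∈ P, ∀ D ∈ P, x ∈ B → x + 1 ∈ D →
      IsGreatest (B : Set ℕ) x ∨ IsLeast (D : Set ℕ) (x + 1)) :
    m + 1 ≤ 2 * P.card := by
  let maxima := P.image fun B : Finset ℕ => sSup (B : Set ℕ)
  let minima := P.image fun B : Finset ℕ => sInf (B : Set ℕ) - 1
  have hmax : ∀ B ∈ P, ∀ x, IsGreatest (B : Set ℕ) x → x ∈ maxima := fun B hB x hx =>
    Finset.mem_image.2 ⟨B, hB, hx.csSup_eq⟩
  have hmin : ∀ B ∈ P, ∀ x, IsLeast (B : Set ℕ) (x + 1) → x ∈ minima := fun B hB x hx =>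
    Finset.mem_image.2 ⟨B, hB, by rw [hx.csInf_eq, Nat.add_sub_cancel]⟩
  have hbounds : ∀ B ∈ P, ∀ x ∈ B, 1 ≤ x ∧ x ≤ m := fun B hB x hx =>
    Finset.mem_Icc.1 (hP.mem_ground hB hx)
  -- `x = 0` and `x = m` are covered by the blocks of `1` and `m`, the other `x` by `h`.
  have hcover : Finset.range (m + 1) ⊆ maxima ∪ minima := by
    intro x hx
    rw [Finset.mem_range] at hx
    rw [Finset.mem_union]
    rcases Nat.eq_zero_or_pos x with rfl | hx0
    · obtain ⟨D, hD, hxD⟩ := hP.exists_mem (Finset.mem_Icc.2 ⟨le_rfl, hm⟩)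
      exact .inr (hmin D hD 0 ⟨hxD, fun y hy => (hbounds D hD y hy).1⟩)
    obtain ⟨B, hB, hxB⟩ := hP.exists_mem (Finset.mem_Icc.2 ⟨hx0, Nat.le_of_lt_succ hx⟩)
    rcases (Nat.le_of_lt_succ hx).eq_or_lt with rfl | hxm
    · exact .inl (hmax B hB x ⟨hxB, fun y hy => (hbounds B hB y hy).2⟩)
    obtain ⟨D, hD, hxD⟩ := hP.exists_mem (Finset.mem_Icc.2 ⟨Nat.le_add_left 1 x, hxm⟩)
    exact (h x B hB D hD hxB hxD).imp (hmax B hB x) (hmin D hD x)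
  calc m + 1 = (Finset.range (m + 1)).card := (Finset.card_range _).symm
    _ ≤ (maxima ∪ minima).card := Finset.card_le_card hcover
    _ ≤ maxima.card + minima.card := Finset.card_union_le _ _
    _ ≤ P.card + P.card := add_le_add Finset.card_image_le Finset.card_image_le
    _ = 2 * P.card := (two_mul _).symm

/-- The family of blocks obtained from `P` by replacing the blocks `D` and `E` by their union. -/
def mergeBlocks (P : Finset (Finset ℕ)) (D E : Finset ℕ) : Finset (Finset ℕ) :=
  insert (D ∪ E) ((P.erase D).erase E)

theorem mergeBlocks_comm (P : Finset (Finset ℕ)) (D E : Finset ℕ) :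
    mergeBlocks P D E = mergeBlocks P E D := by
  rw [mergeBlocks, mergeBlocks, Finset.union_comm, Finset.erase_right_comm]

theorem mem_mergeBlocks :
    B ∈ mergeBlocks P D E ↔ B = D ∪ E ∨ (B ≠ E ∧ B ≠ D ∧ B ∈ P) := by
  simp only [mergeBlocks, Finset.mem_insert, Finset.mem_erase]

theorem card_mergeBlocks_lt (hD : D ∈ P) (hE : E ∈ P) (hDE : D ≠ E) :
    (mergeBlocks P D E).card < P.card := by
  have hE' : E ∈ P.erase D := Finset.mem_erase.2 ⟨hDE.symm, hE⟩
  calc (mergeBlocks P D E).card ≤ ((P.erase D).erase E).card + 1 := Finset.card_insert_le _ _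
    _ = (P.erase D).card := Finset.card_erase_add_one hE'
    _ < P.card := Finset.card_erase_lt_of_mem hD

theorem IsPartitionOf.mergeBlocks (hP : IsPartitionOf G P) (hD : D ∈ P) (hE : E ∈ P) :
    IsPartitionOf G (mergeBlocks P D E) := by
  refine ⟨fun B hB => ?_, fun B hB => ?_, fun x hx => ?_⟩
  · rcases mem_mergeBlocks.1 hB with rfl | ⟨-, -, hB⟩
    · exact (hP.1 D hD).mono Finset.subset_union_left
    · exact hP.1 B hB
  · rcases mem_mergeBlocks.1 hB with rfl | ⟨-, -, hB⟩
    · exact Finset.union_subset (hP.2.1 D hD) (hP.2.1 E hE)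
    · exact hP.2.1 B hB
  · obtain ⟨B, hB, hxB⟩ := hP.exists_mem hx
    have hblock : ∀ F ∈ P, x ∈ F ↔ F = B := fun F hF =>
      ⟨fun hxF => hP.eq_of_mem hF hB hxF hxB, fun h => h ▸ hxB⟩
    have hDB := hblock D hD
    have hEB := hblock E hE
    by_cases hxDE : x ∈ D ∪ E
    · refine ⟨D ∪ E, ⟨mem_mergeBlocks.2 (.inl rfl), hxDE⟩, fun F hF => ?_⟩
      grind [mem_mergeBlocks]
    · refine ⟨B, ⟨mem_mergeBlocks.2 (.inr ⟨?_, ?_, hB⟩), hxB⟩, fun F hF => ?_⟩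
      all_goals grind [mem_mergeBlocks]

theorem isolate_eq_of_mem {i : ℕ} (hP : IsPartitionOf G P) (hB : B ∈ P) (hi : i ∈ B) :
    isolate P i = insert {i} (insert (B.erase i) (P.erase B)) := by
  have herase : ∀ F ∈ P.erase B, F.erase i = F := fun F hF =>
    Finset.erase_eq_of_notMem fun hiF =>
      Finset.ne_of_mem_erase hF (hP.eq_of_mem (Finset.mem_of_mem_erase hF) hB hiF hi)
  rw [isolate, ← Finset.insert_erase hB, Finset.image_insert, Finset.image_congr herase,
    Finset.image_id', Finset.erase_insert (Finset.notMem_erase B P)]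

theorem card_isolate_le (P : Finset (Finset ℕ)) (i : ℕ) : (isolate P i).card ≤ P.card + 1 :=
  (Finset.card_insert_le _ _).trans (Nat.succ_le_succ Finset.card_image_le)

end Partitions

section Arcs

variable {B D : Finset ℕ} {x y z : ℕ}

/-- `x` and `y` lie in the same arc of the circle cut at the points of `B`: either all points
of `B` lie between `x` and `y`, or none does. -/
def SameArc (B : Finset ℕ) (x y : ℕ) : Prop :=
  ∀ u ∈ B, ∀ v ∈ B, ((x < u ↔ y < u) ↔ (x < v ↔ y < v))

theorem SameArc.symm (h : SameArc B x y) : SameArc B y x := fun u hu v hv => by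
  rw [iff_comm (a := y < u), iff_comm (a := y < v)]
  exact h u hu v hv

theorem SameArc.trans (hxy : SameArc B x y) (hyz : SameArc B y z) : SameArc B x z :=
  fun u hu v hv => by
    have huv := hxy u hu v hv
    have huv' := hyz u hu v hv
    tauto

theorem SameArc.mono (h : SameArc B x y) (hDB : D ⊆ B) : SameArc D x y :=
  fun u hu v hv => h u (hDB hu) v (hDB hv)

theorem sameArc_singleton (i x y : ℕ) : SameArc {i} x y := fun u hu v hv => by
  rw [Finset.mem_singleton.1 hu, Finset.mem_singleton.1 hv]

theorem NonCrossing.sameArc {P : Finset (Finset ℕ)} (hP : NonCrossing P) (hB : B ∈ P)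
    (hD : D ∈ P) (hBD : Disjoint B D) (hx : x ∈ D) (hy : y ∈ D) : SameArc B x y := by
  have not_separated : ∀ x ∈ D, ∀ y ∈ D, ∀ u ∈ B, ∀ v ∈ B,
      ¬ (x < u ∧ u < y ∧ (v < x ∨ y < v)) := by
    rintro x hx y hy u hu v hv ⟨hxu, huy, hv' | hv'⟩
    · exact Finset.disjoint_left.1 hBD hu
        (hP v x u y hv' hxu huy B hB D hD hv hu hx hy ▸ hu)
    · exact Finset.disjoint_left.1 hBD hu
        (hP x u y v hxu huy hv' D hD B hB hx hy hu hv ▸ hu)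
  intro u hu v hv
  have hne : ∀ w ∈ B, w ≠ x ∧ w ≠ y := fun w hw =>
    ⟨fun h => Finset.disjoint_left.1 hBD hw (h ▸ hx),
      fun h => Finset.disjoint_left.1 hBD hw (h ▸ hy)⟩
  have hu' := hne u hu
  have hv' := hne v hv
  have hxyu := not_separated x hx y hy u hu v hv
  have hyxu := not_separated y hy x hx u hu v hv
  have hxyv := not_separated x hx y hy v hv u hu
  have hyxv := not_separated y hy x hx v hv u hu
  omega

end Arcs

section CyclicNeighbours

variable {n i : ℕ}

/-- The successor of `i` in the cyclic order on `{1, …, 2n}`. -/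
def cyclicSucc (n i : ℕ) : ℕ := if i = 2 * n then 1 else i + 1

/-- The predecessor of `i` in the cyclic order on `{1, …, 2n}`. -/
def cyclicPred (n i : ℕ) : ℕ := if i = 1 then 2 * n else i - 1

/-- The elements of `{1, …, 2n}` of the same parity as `i`. -/
def parityClass (n i : ℕ) : Finset ℕ := (Finset.Icc 1 (2 * n)).filter (· % 2 = i % 2)

theorem mem_parityClass {x : ℕ} :
    x ∈ parityClass n i ↔ (1 ≤ x ∧ x ≤ 2 * n) ∧ x % 2 = i % 2 := by
  rw [parityClass, Finset.mem_filter, Finset.mem_Icc]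

theorem oddSet_eq_parityClass (n : ℕ) (hi : i % 2 = 1) : oddSet n = parityClass n i := by
  ext x
  rw [mem_parityClass, hi, oddSet, Finset.mem_image]
  simp only [Finset.mem_range]
  exact ⟨fun ⟨k, hk, h⟩ => by omega, fun h => ⟨x / 2, by omega, by omega⟩⟩

theorem evenSet_eq_parityClass (n : ℕ) (hi : i % 2 = 0) : evenSet n = parityClass n i := by
  ext x
  rw [mem_parityClass, hi, evenSet, Finset.mem_image]
  simp only [Finset.mem_range]
  exact ⟨fun ⟨k, hk, h⟩ => by omega, fun h => ⟨x / 2 - 1, by omega, by omega⟩⟩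

theorem disjoint_parityClass_succ (n i : ℕ) :
    Disjoint (parityClass n i) (parityClass n (i + 1)) :=
  Finset.disjoint_left.2 fun x hx hx' => by
    rw [mem_parityClass] at hx hx'
    omega

theorem parityClass_union_succ (n i : ℕ) :
    parityClass n i ∪ parityClass n (i + 1) = Finset.Icc 1 (2 * n) := by
  ext x
  rw [Finset.mem_union, mem_parityClass, mem_parityClass, Finset.mem_Icc]
  omega

theorem cyclicSucc_mem_parityClass_succ (hi : i ∈ parityClass n i) :
    cyclicSucc n i ∈ parityClass n (i + 1) := by
  rw [mem_parityClass] at hi ⊢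
  unfold cyclicSucc
  split_ifs <;> omega

theorem cyclicPred_mem_parityClass_succ (hi : i ∈ parityClass n i) :
    cyclicPred n i ∈ parityClass n (i + 1) := by
  rw [mem_parityClass] at hi ⊢
  unfold cyclicPred
  split_ifs <;> omega

theorem sameArc_cyclicPred_cyclicSucc_iff {B : Finset ℕ} (hB : B ⊆ parityClass n i) (hi : i ∈ B) :
    SameArc B (cyclicPred n i) (cyclicSucc n i) ↔ B = {i} := by
  constructor
  · intro h
    refine Finset.eq_singleton_iff_unique_mem.2 ⟨hi, fun j hj => ?_⟩
    have hij := h i hi j hj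
    have hi' := mem_parityClass.1 (hB hi)
    have hj' := mem_parityClass.1 (hB hj)
    unfold cyclicPred cyclicSucc at hij
    split_ifs at hij <;> omega
  · rintro rfl
    exact sameArc_singleton _ _ _

theorem sameArc_cyclicPred_cyclicSucc_of_notMem {B : Finset ℕ} (hB : B ⊆ parityClass n i)
    (hi : i ∉ B) : SameArc B (cyclicPred n i) (cyclicSucc n i) := by
  intro u hu v hv
  have hu' := mem_parityClass.1 (hB hu)
  have hv' := mem_parityClass.1 (hB hv)
  have hui : u ≠ i := ne_of_mem_of_not_mem hu hi
  have hvi : v ≠ i := ne_of_mem_of_not_mem hv hi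
  unfold cyclicPred cyclicSucc
  split_ifs <;> omega

end CyclicNeighbours

section ArcCompatible

variable {n i : ℕ} {A C C' : Finset (Finset ℕ)} {D E : Finset ℕ} {x y : ℕ}

/-- `A` partitions the elements of `{1, …, 2n}` of the parity of `i`, `C` those of the other
parity, and no block of `A` crosses a block of `C`. Indexing by `i` rather than by a parity
treats the generators with odd and with even index alike. -/
structure ArcCompatible (n i : ℕ) (A C : Finset (Finset ℕ)) : Prop where
  left : IsPartitionOf (parityClass n i) A
  right : IsPartitionOf (parityClass n (i + 1)) C
  sameArc : ∀ B ∈ A, ∀ D ∈ C, ∀ x ∈ D, ∀ y ∈ D, SameArc B x y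

theorem IsNCPair.arcCompatible_of_odd (h : IsNCPair n A C) (hi : i % 2 = 1) :
    ArcCompatible n i A C := by
  obtain ⟨hA, -, hC, -, hAC, -⟩ := h
  rw [oddSet_eq_parityClass n hi] at hA
  rw [evenSet_eq_parityClass n (show (i + 1) % 2 = 0 by omega)] at hC
  exact ⟨hA, hC, fun B hB D hD x hx y hy =>
    hAC.sameArc (Finset.mem_union_left _ hB) (Finset.mem_union_right _ hD)
      ((disjoint_parityClass_succ n i).mono (hA.2.1 B hB) (hC.2.1 D hD)) hx hy⟩

theorem IsNCPair.arcCompatible_of_even (h : IsNCPair n C A) (hi : i % 2 = 0) :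
    ArcCompatible n i A C := by
  obtain ⟨hC, -, hA, -, hCA, -⟩ := h
  rw [evenSet_eq_parityClass n hi] at hA
  rw [oddSet_eq_parityClass n (show (i + 1) % 2 = 1 by omega)] at hC
  exact ⟨hA, hC, fun B hB D hD x hx y hy =>
    hCA.sameArc (Finset.mem_union_right _ hB) (Finset.mem_union_left _ hD)
      ((disjoint_parityClass_succ n i).mono (hA.2.1 B hB) (hC.2.1 D hD)) hx hy⟩

namespace ArcCompatible

theorem isGreatest_or_isLeast (h : ArcCompatible n i A C) {B : Finset ℕ} (hB : B ∈ A ∪ C)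
    (hD : D ∈ A ∪ C) (hxB : x ∈ B) (hxD : x + 1 ∈ D) :
    IsGreatest (B : Set ℕ) x ∨ IsLeast (D : Set ℕ) (x + 1) := by
  have hleft : ∀ F ∈ A, ∀ z ∈ F, z % 2 = i % 2 := fun F hF z hz =>
    (mem_parityClass.1 (h.left.mem_ground hF hz)).2
  have hright : ∀ F ∈ C, ∀ z ∈ F, z % 2 = (i + 1) % 2 := fun F hF z hz =>
    (mem_parityClass.1 (h.right.mem_ground hF hz)).2
  by_contra hcon
  simp only [IsGreatest, IsLeast, upperBounds, lowerBounds, Set.mem_ofPred_eq, Finset.mem_coe,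
    hxB, hxD, true_and, not_or, not_forall, not_le] at hcon
  obtain ⟨⟨b, hb, hxb⟩, d, hd, hdx⟩ := hcon
  rcases Finset.mem_union.1 hB with hB | hB <;> rcases Finset.mem_union.1 hD with hD | hD
  · have hparity := hleft B hB x hxB
    have hparity' := hleft D hD _ hxD
    omega
  · have hparity := hleft B hB x hxB
    have hparity_b := hleft B hB b hb
    have hparity_d := hright D hD d hd
    have harc := h.sameArc B hB D hD d hd (x + 1) hxD x hxB b hb
    omega
  · have hparity := hright B hB x hxB
    have hparity_b := hright B hB b hb
    have hparity_d := hleft D hD d hd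
    have harc := h.sameArc D hD B hB x hxB b hb d hd (x + 1) hxD
    omega
  · have hparity := hright B hB x hxB
    have hparity' := hright D hD _ hxD
    omega

theorem succ_le_card_add_card (h : ArcCompatible n i A C) (hn : 1 ≤ n) :
    n + 1 ≤ A.card + C.card := by
  have hpartition : IsPartitionOf (Finset.Icc 1 (2 * n)) (A ∪ C) :=
    parityClass_union_succ n i ▸ h.left.union h.right (disjoint_parityClass_succ n i)
  have hcount := hpartition.succ_le_two_mul_card (by omega) fun x B hB D hD =>
    h.isGreatest_or_isLeast hB hD
  have hunion := Finset.card_union_le A C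
  omega

theorem mergeBlocks_right (h : ArcCompatible n i A C) (hD : D ∈ C) (hE : E ∈ C) (hx : x ∈ D)
    (hy : y ∈ E) (hxy : ∀ B ∈ A, SameArc B x y) :
    ArcCompatible n i A (mergeBlocks C D E) := by
  refine ⟨h.left, h.right.mergeBlocks hD hE, fun B hB F hF a ha b hb => ?_⟩
  rcases mem_mergeBlocks.1 hF with rfl | ⟨-, -, hF⟩
  · have hsame : ∀ z ∈ D ∪ E, SameArc B z x := fun z hz => by
      rcases Finset.mem_union.1 hz with hz | hz
      · exact h.sameArc B hB D hD z hz x hx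
      · exact (h.sameArc B hB E hE z hz y hy).trans (hxy B hB).symm
    exact (hsame a ha).trans (hsame b hb).symm
  · exact h.sameArc B hB F hF a ha b hb

theorem eq_of_sameArc (h : ArcCompatible n i A C) (hcard : A.card + C.card ≤ n + 1)
    (hD : D ∈ C) (hE : E ∈ C) (hx : x ∈ D) (hy : y ∈ E) (hxy : ∀ B ∈ A, SameArc B x y) :
    D = E := by
  by_contra hDE
  have hx' := mem_parityClass.1 (h.right.mem_ground hD hx)
  have hmerged := (h.mergeBlocks_right hD hE hx hy hxy).succ_le_card_add_card (by omega)
  have hlt := card_mergeBlocks_lt hD hE hDE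
  omega

theorem right_unique (h : ArcCompatible n i A C) (h' : ArcCompatible n i A C')
    (hcard : A.card + C.card ≤ n + 1) (hcard' : A.card + C'.card ≤ n + 1) : C = C' := by
  have subset_of_mem : ∀ {C₁ C₂ : Finset (Finset ℕ)}, ArcCompatible n i A C₁ →
      ArcCompatible n i A C₂ → A.card + C₂.card ≤ n + 1 →
      ∀ D ∈ C₁, ∀ E ∈ C₂, ∀ x ∈ D, x ∈ E → D ⊆ E := by
    intro C₁ C₂ h₁ h₂ hcard₂ D hD E hE x hxD hxE y hyD
    obtain ⟨F, hF, hyF⟩ := h₂.right.exists_mem (h₁.right.mem_ground hD hyD)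
    rwa [h₂.eq_of_sameArc hcard₂ hE hF hxE hyF fun B hB => h₁.sameArc B hB D hD x hxD y hyD]
  exact h.right.eq_of_forall_eq_of_mem h'.right fun D hD E hE x hxD hxE =>
    (subset_of_mem h h' hcard' D hD E hE x hxD hxE).antisymm
      (subset_of_mem h' h hcard E hE D hD x hxE hxD)

theorem isolate_left (h : ArcCompatible n i A C)
    (hA : IsPartitionOf (parityClass n i) (isolate A i)) : ArcCompatible n i (isolate A i) C := by
  refine ⟨hA, h.right, fun B hB D hD x hx y hy => ?_⟩
  rcases Finset.mem_insert.1 hB with rfl | hB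
  · exact sameArc_singleton i x y
  · obtain ⟨F, hF, rfl⟩ := Finset.mem_image.1 hB
    exact (h.sameArc F hF D hD x hx y hy).mono (Finset.erase_subset i F)

theorem ne_of_singleton_notMem (h : ArcCompatible n i A C) (hi : i ∈ parityClass n i)
    (hiA : {i} ∉ A) (hD : D ∈ C) (hE : E ∈ C) (hp : cyclicPred n i ∈ D)
    (hq : cyclicSucc n i ∈ E) : D ≠ E := by
  rintro rfl
  obtain ⟨B, hB, hiB⟩ := h.left.exists_mem hi
  have hBi := (sameArc_cyclicPred_cyclicSucc_iff (h.left.2.1 B hB) hiB).1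
    (h.sameArc B hB D hD _ hp _ hq)
  exact hiA (hBi ▸ hB)

theorem right_eq_mergeBlocks_of_isolate (h : ArcCompatible n i A C)
    (h' : ArcCompatible n i (isolate A i) C') (hcard : A.card + C.card ≤ n + 1)
    (hcard' : (isolate A i).card + C'.card ≤ n + 1) (hD : D ∈ C) (hE : E ∈ C)
    (hDE : D ≠ E) (hp : cyclicPred n i ∈ D) (hq : cyclicSucc n i ∈ E) :
    C' = mergeBlocks C D E := by
  have hneighbours : ∀ B ∈ isolate A i, SameArc B (cyclicPred n i) (cyclicSucc n i) := by
    intro B hB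
    have hBn := h'.left.2.1 B hB
    rcases Finset.mem_insert.1 hB with rfl | hB
    · exact sameArc_singleton _ _ _
    · obtain ⟨F, -, rfl⟩ := Finset.mem_image.1 hB
      exact sameArc_cyclicPred_cyclicSucc_of_notMem hBn (Finset.notMem_erase i F)
  have hmerged := (h.isolate_left h'.left).mergeBlocks_right hD hE hp hq hneighbours
  have hlt := card_mergeBlocks_lt hD hE hDE
  have hle := card_isolate_le A i
  exact h'.right_unique hmerged hcard' (by omega)

end ArcCompatible

end ArcCompatible

section Concordance

variable {k i q : ℕ} {G H X I J D E : Finset ℕ} {A C : Finset (Finset ℕ)}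

/-- The `k`-element subsets of `X` concordant with the pair `(A, C)`; the concordance vector
sums over those with `X = {1, …, 2n}` and `k = n - 1`. -/
noncomputable def concordantSets (X : Finset ℕ) (k : ℕ) (A C : Finset (Finset ℕ)) :
    Finset (Finset ℕ) :=
  (X.powersetCard k).filter (ConcordantWith A C)

theorem concVec_eq_sum (n : ℕ) (A C : Finset (Finset ℕ)) :
    concVec n A C =
      ∑ I ∈ concordantSets (Finset.Icc 1 (2 * n)) (n - 1) A C, finsetWedge n (n - 1) I :=
  rfl

theorem mem_concordantSets :
    I ∈ concordantSets X k A C ↔ (I ⊆ X ∧ I.card = k) ∧ ConcordantWith A C I := by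
  rw [concordantSets, Finset.mem_filter, Finset.mem_powersetCard]

theorem concVec_comm (n : ℕ) (A C : Finset (Finset ℕ)) : concVec n A C = concVec n C A := by
  unfold concVec ConcordantWith
  rw [Finset.union_comm]

theorem ConcordantWith.notMem_of_singleton_mem (hI : ConcordantWith A C I)
    (hi : {i} ∈ A ∪ C) : i ∉ I := fun hiI => by
  have hcard := hI {i} hi
  rw [Finset.sdiff_eq_empty_iff_subset.2 (Finset.singleton_subset_iff.2 hiI)] at hcard
  exact absurd hcard (by simp)

theorem not_subset_iff_subset_of_card_sdiff_eq_one (hDE : Disjoint D E)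
    (hJ : ((D ∪ E) \ J).card = 1) : ¬ D ⊆ J ↔ E ⊆ J := by
  rw [Finset.union_sdiff_distrib, Finset.card_union_of_disjoint
    (hDE.mono Finset.sdiff_subset Finset.sdiff_subset)] at hJ
  rw [← Finset.sdiff_eq_empty_iff_subset, ← Finset.sdiff_eq_empty_iff_subset,
    ← Finset.card_eq_zero, ← Finset.card_eq_zero]
  omega

theorem card_insert_erase (hi : i ∈ I) (hq : q ∉ I) : (insert q (I.erase i)).card = I.card := by
  rw [Finset.card_insert_of_notMem (fun h => hq (Finset.mem_of_mem_erase h)),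
    Finset.card_erase_add_one hi]

theorem insert_erase_insert_erase (hi : i ∈ I) (hq : q ∉ I) :
    insert i ((insert q (I.erase i)).erase q) = I := by
  rw [Finset.erase_insert (fun h => hq (Finset.mem_of_mem_erase h)), Finset.insert_erase hi]

theorem sdiff_insert_erase_of_notMem (hi : i ∉ D) (hq : q ∉ D) :
    D \ insert q (I.erase i) = D \ I := by
  grind

theorem card_sdiff_eq_one_iff_subset_insert_erase (hi : i ∉ D) (hq : q ∈ D) (hqI : q ∉ I) :
    (D \ I).card = 1 ↔ D ⊆ insert q (I.erase i) := by
  have hqD : q ∈ D \ I := Finset.mem_sdiff.2 ⟨hq, hqI⟩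
  have hsingleton : (D \ I).card = 1 ↔ D \ I = {q} := by
    refine ⟨fun h => ?_, fun h => h ▸ Finset.card_singleton q⟩
    exact (Finset.eq_of_subset_of_card_le (Finset.singleton_subset_iff.2 hqD) h.le).symm
  rw [hsingleton, Finset.eq_singleton_iff_unique_mem]
  simp only [Finset.subset_iff, Finset.mem_sdiff, Finset.mem_insert, Finset.mem_erase]
  grind

theorem concordantWith_iff_of_mem {B : Finset ℕ} (hB : B ∈ A) (hD : D ∈ C) (hE : E ∈ C)
    (hDE : D ≠ E) :
    ConcordantWith A C I ↔ (B \ I).card = 1 ∧ (D \ I).card = 1 ∧ (E \ I).card = 1 ∧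
      ∀ F ∈ A.erase B ∪ (C.erase D).erase E, (F \ I).card = 1 := by
  have hE' : E ∈ C.erase D := Finset.mem_erase.2 ⟨hDE.symm, hE⟩
  have hAC : A ∪ C = insert B (A.erase B) ∪ insert D (insert E ((C.erase D).erase E)) := by
    rw [Finset.insert_erase hE', Finset.insert_erase hB, Finset.insert_erase hD]
  rw [ConcordantWith, hAC]
  simp only [Finset.forall_mem_union, Finset.forall_mem_insert]
  tauto

theorem concordantWith_isolate_mergeBlocks_iff {B : Finset ℕ} (hA : IsPartitionOf G A)
    (hB : B ∈ A) (hi : i ∈ B) :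
    ConcordantWith (isolate A i) (mergeBlocks C D E) I ↔
      (({i} : Finset ℕ) \ I).card = 1 ∧ ((B.erase i) \ I).card = 1 ∧ ((D ∪ E) \ I).card = 1 ∧
      ∀ F ∈ A.erase B ∪ (C.erase D).erase E, (F \ I).card = 1 := by
  rw [ConcordantWith, isolate_eq_of_mem hA hB hi, mergeBlocks]
  simp only [Finset.forall_mem_union, Finset.forall_mem_insert]
  tauto

theorem concordantWith_iff_concordantWith_exchange (hA : IsPartitionOf G A)
    (hC : IsPartitionOf H C) (hGH : Disjoint G H) (hi : i ∈ G) (hD : D ∈ C) (hE : E ∈ C)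
    (hDE : D ≠ E) (hq : q ∈ D) (hiI : i ∈ I) (hqI : q ∉ I) :
    ConcordantWith A C I ↔
      ConcordantWith (isolate A i) (mergeBlocks C D E) (insert q (I.erase i)) ∧
        D ⊆ insert q (I.erase i) := by
  obtain ⟨B, hB, hiB⟩ := hA.exists_mem hi
  set J := insert q (I.erase i) with hJ
  have hqA : ∀ F ∈ A, q ∉ F := fun F hF hqF =>
    Finset.disjoint_left.1 hGH (hA.mem_ground hF hqF) (hC.mem_ground hD hq)
  have hiC : ∀ F ∈ C, i ∉ F := fun F hF hiF =>
    Finset.disjoint_left.1 hGH hi (hC.mem_ground hF hiF)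
  have hqE : q ∉ E := Finset.disjoint_left.1 (hC.disjoint hD hE hDE) hq
  have hiJ : (({i} : Finset ℕ) \ J).card = 1 := by
    have hiq : i ≠ q := ne_of_mem_of_not_mem hiI hqI
    rw [Finset.sdiff_eq_self_of_disjoint (by simp [hJ, hiq]), Finset.card_singleton]
  have hBJ : B.erase i \ J = B \ I := by
    grind
  have hrest : (∀ F ∈ A.erase B ∪ (C.erase D).erase E, (F \ J).card = 1) ↔
      ∀ F ∈ A.erase B ∪ (C.erase D).erase E, (F \ I).card = 1 := by
    refine forall₂_congr fun F hF => ?_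
    rw [sdiff_insert_erase_of_notMem] <;> grind [hA.eq_of_mem, hC.eq_of_mem]
  rw [concordantWith_iff_of_mem hB hD hE hDE, concordantWith_isolate_mergeBlocks_iff hA hB hiB,
    card_sdiff_eq_one_iff_subset_insert_erase (hiC D hD) hq hqI, hBJ, hrest]
  have hunion : D ⊆ J → ((D ∪ E) \ J).card = (E \ I).card := fun hDJ => by
    rw [Finset.union_sdiff_distrib, Finset.sdiff_eq_empty_iff_subset.2 hDJ, Finset.empty_union,
      sdiff_insert_erase_of_notMem (hiC E hE) hqE]
  constructor
  · rintro ⟨hB1, hDJ, hE1, hrest1⟩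
    exact ⟨⟨hiJ, hB1, (hunion hDJ).trans hE1, hrest1⟩, hDJ⟩
  · rintro ⟨⟨-, hB1, hDE1, hrest1⟩, hDJ⟩
    exact ⟨hB1, hDJ, (hunion hDJ).symm.trans hDE1, hrest1⟩

variable {M : Type*} [AddCommMonoid M]

theorem sum_concordantSets_exchange (f : Finset ℕ → M) (hA : IsPartitionOf G A)
    (hC : IsPartitionOf H C) (hGH : Disjoint G H) (hX : G ∪ H ⊆ X) (hi : i ∈ G) (hD : D ∈ C)
    (hE : E ∈ C) (hDE : D ≠ E) (hq : q ∈ D) :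
    ∑ I ∈ concordantSets X k A C with i ∈ I ∧ q ∉ I, f (insert q (I.erase i)) =
      ∑ J ∈ concordantSets X k (isolate A i) (mergeBlocks C D E) with D ⊆ J, f J := by
  have hiX : i ∈ X := hX (Finset.mem_union_left _ hi)
  have hqX : q ∈ X := hX (Finset.mem_union_right _ (hC.mem_ground hD hq))
  have exchange_iff := fun I => concordantWith_iff_concordantWith_exchange (I := I)
    hA hC hGH hi hD hE hDE hq
  have notMem : ∀ J, ConcordantWith (isolate A i) (mergeBlocks C D E) J → i ∉ J := fun J hJ =>
    hJ.notMem_of_singleton_mem (Finset.mem_union_left _ (Finset.mem_insert_self _ _))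
  refine Finset.sum_nbij' (fun I => insert q (I.erase i)) (fun J => insert i (J.erase q))
    ?_ ?_ ?_ ?_ fun I _ => rfl
  all_goals simp only [Finset.mem_filter, mem_concordantSets]
  · rintro I ⟨⟨⟨hIX, rfl⟩, hI⟩, hiI, hqI⟩
    obtain ⟨hJ, hDJ⟩ := (exchange_iff I hiI hqI).1 hI
    exact ⟨⟨⟨Finset.insert_subset hqX ((Finset.erase_subset _ _).trans hIX),
      card_insert_erase hiI hqI⟩, hJ⟩, hDJ⟩
  · rintro J ⟨⟨⟨hJX, rfl⟩, hJ⟩, hDJ⟩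
    have hiJ := notMem J hJ
    have hqi : q ≠ i := ne_of_mem_of_not_mem (hDJ hq) hiJ
    have hiI : i ∈ insert i (J.erase q) := Finset.mem_insert_self _ _
    have hqI : q ∉ insert i (J.erase q) := by simp [hqi]
    refine ⟨⟨⟨Finset.insert_subset hiX ((Finset.erase_subset _ _).trans hJX),
      card_insert_erase (hDJ hq) hiJ⟩, ?_⟩, hiI, hqI⟩
    rw [exchange_iff _ hiI hqI, insert_erase_insert_erase (hDJ hq) hiJ]
    exact ⟨hJ, hDJ⟩
  · rintro I ⟨-, hiI, hqI⟩
    exact insert_erase_insert_erase hiI hqI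
  · rintro J ⟨⟨-, hJ⟩, hDJ⟩
    exact insert_erase_insert_erase (hDJ hq) (notMem J hJ)

theorem sum_concordantSets_isolate_mergeBlocks {p : ℕ} (f : Finset ℕ → M)
    (hA : IsPartitionOf G A) (hC : IsPartitionOf H C) (hGH : Disjoint G H) (hX : G ∪ H ⊆ X)
    (hi : i ∈ G) (hD : D ∈ C) (hE : E ∈ C) (hDE : D ≠ E) (hp : p ∈ D) (hq : q ∈ E) :
    ∑ J ∈ concordantSets X k (isolate A i) (mergeBlocks C D E), f J =
      ∑ I ∈ concordantSets X k A C,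
        ((if i ∈ I ∧ p ∉ I then f (insert p (I.erase i)) else 0) +
          if i ∈ I ∧ q ∉ I then f (insert q (I.erase i)) else 0) := by
  have hfilter : ∀ J ∈ concordantSets X k (isolate A i) (mergeBlocks C D E),
      ¬ D ⊆ J ↔ E ⊆ J := fun J hJ =>
    not_subset_iff_subset_of_card_sdiff_eq_one (hC.disjoint hD hE hDE)
      ((mem_concordantSets.1 hJ).2 _ (Finset.mem_union_right _ (Finset.mem_insert_self _ _)))
  rw [Finset.sum_add_distrib, ← Finset.sum_filter, ← Finset.sum_filter,
    sum_concordantSets_exchange f hA hC hGH hX hi hD hE hDE hp,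
    sum_concordantSets_exchange f hA hC hGH hX hi hE hD hDE.symm hq, mergeBlocks_comm C E D,
    ← Finset.filter_congr hfilter, Finset.sum_filter_add_sum_filter_not]

end Concordance

section FinsetWedge

open ExteriorAlgebra

variable {n k q : ℕ} {K : Finset ℕ}

theorem finsetWedge_insert_of_forall_lt (hq : ∀ b ∈ K, q < b) :
    finsetWedge n (k + 1) (insert q K) = ι ℝ (stdE n q) * finsetWedge n k K := by
  rw [finsetWedge, finsetWedge, ιMulti_succ_apply,
    Finset.sort_insert _ (fun b hb => (hq b hb).le) fun h => (hq q h).false]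
  rfl

theorem finsetWedge_insert (hK : K.card = k) (hq : q ∉ K) :
    finsetWedge n (k + 1) (insert q K) =
      (-1 : ℝ) ^ (K.filter (· < q)).card • (ι ℝ (stdE n q) * finsetWedge n k K) := by
  induction K using Finset.induction_on_min generalizing k with
  | empty => simpa using finsetWedge_insert_of_forall_lt (K := ∅) (q := q) (by simp)
  | insert a s ha ih =>
    have has : a ∉ s := fun h => (ha a h).false
    obtain ⟨hqa, hqs⟩ : q ≠ a ∧ q ∉ s := by simpa [not_or] using hq
    rcases hqa.lt_or_gt with hqa | haq
    · have hlt : ∀ b ∈ insert a s, q < b :=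
        (Finset.forall_mem_insert _ _ _).2 ⟨hqa, fun b hb => hqa.trans (ha b hb)⟩
      rw [finsetWedge_insert_of_forall_lt hlt,
        Finset.filter_false_of_mem fun b hb => (hlt b hb).not_gt, Finset.card_empty, pow_zero,
        one_smul]
    · obtain rfl : s.card + 1 = k := by rw [← hK, Finset.card_insert_of_notMem has]
      have swap : ι ℝ (stdE n a) * ι ℝ (stdE n q) = -(ι ℝ (stdE n q) * ι ℝ (stdE n a)) :=
        eq_neg_of_add_eq_zero_left (ι_add_mul_swap _ _)
      rw [Finset.insert_comm, finsetWedge_insert_of_forall_lt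
          ((Finset.forall_mem_insert _ _ _).2 ⟨haq, ha⟩), ih rfl hqs,
        finsetWedge_insert_of_forall_lt ha, Finset.filter_insert, if_pos haq,
        Finset.card_insert_of_notMem fun h => has (Finset.mem_of_mem_filter a h), mul_smul_comm,
        ← mul_assoc, swap, neg_mul, mul_assoc, pow_succ, mul_neg_one, neg_smul, smul_neg]

theorem ι_mul_finsetWedge_of_mem (hK : K.card = k) (hq : q ∈ K) :
    ι ℝ (stdE n q) * finsetWedge n k K = 0 := by
  obtain rfl : (K.erase q).card + 1 = k := by rw [← hK, Finset.card_erase_add_one hq]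
  have hinsert := finsetWedge_insert (n := n) rfl (Finset.notMem_erase q K)
  rw [Finset.insert_erase hq] at hinsert
  rw [hinsert, mul_smul_comm, ← mul_assoc, ι_sq_zero, zero_mul, smul_zero]

end FinsetWedge

section LamGenerator

open ExteriorAlgebra Matrix

variable {n i j k : ℕ} {t : ℝ} {I K : Finset ℕ}

/-- The sign of the entry of `𝔲_i` in the column of a cyclic neighbour `j` of `i`: it is
`(-1) ^ n` for the two entries joining `1` and `2n`, and `1` otherwise. -/
noncomputable def wrapSign (n i j : ℕ) : ℝ := if i + 1 = j ∨ j + 1 = i then 1 else (-1) ^ n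

/-- The nonzero row of `𝔲_i`, that is `e_{i-1} + e_{i+1}` up to the signs at the ends. -/
noncomputable def lamRow (n i : ℕ) : Fin (2 * n) → ℝ :=
  wrapSign n i (cyclicPred n i) • stdE n (cyclicPred n i) +
    wrapSign n i (cyclicSucc n i) • stdE n (cyclicSucc n i)

theorem frakU_eq_vecMulVec (hn : 2 ≤ n) (hi1 : 1 ≤ i) (hi2 : i ≤ 2 * n) :
    frakU n i = vecMulVec (stdE n i) (lamRow n i) := by
  ext a b
  simp only [vecMulVec_apply, lamRow, Pi.add_apply, Pi.smul_apply, smul_eq_mul, stdE, frakU,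
    wrapSign, cyclicPred, cyclicSucc]
  have ha := a.isLt
  have hb := b.isLt
  split_ifs <;> first | omega | simp

theorem lamU_apply (hn : 2 ≤ n) (hi1 : 1 ≤ i) (hi2 : i ≤ 2 * n) (v : Fin (2 * n) → ℝ) :
    lamU n i t v = v + (t * (stdE n i ⬝ᵥ v)) • lamRow n i := by
  rw [lamU, mulVecLin_apply, lamGen, frakU_eq_vecMulVec hn hi1 hi2, transpose_add,
    transpose_one, transpose_smul, transpose_vecMulVec, add_mulVec, one_mulVec, smul_mulVec,
    vecMulVec_mulVec, op_smul_eq_smul, smul_smul]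

theorem stdE_dotProduct_stdE_of_ne (hij : i ≠ j) : stdE n i ⬝ᵥ stdE n j = 0 :=
  Finset.sum_eq_zero fun x _ => by
    unfold stdE
    split_ifs <;> first | omega | simp

theorem stdE_dotProduct_self (hi1 : 1 ≤ i) (hi2 : i ≤ 2 * n) : stdE n i ⬝ᵥ stdE n i = 1 := by
  have hi : i - 1 < 2 * n := by omega
  rw [dotProduct, Finset.sum_eq_single_of_mem (⟨i - 1, hi⟩ : Fin (2 * n)) (Finset.mem_univ _)]
  · simp [stdE, hi1]
  · intro x _ hx
    have hxi : (x : ℕ) + 1 ≠ i := fun h => hx (Fin.ext (Nat.eq_sub_of_add_eq h))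
    rw [stdE, if_neg hxi, mul_zero]

theorem lamU_stdE_of_ne (hn : 2 ≤ n) (hi1 : 1 ≤ i) (hi2 : i ≤ 2 * n) (hji : j ≠ i) :
    lamU n i t (stdE n j) = stdE n j := by
  rw [lamU_apply hn hi1 hi2, stdE_dotProduct_stdE_of_ne hji.symm, mul_zero, zero_smul, add_zero]

theorem lamU_stdE_self (hn : 2 ≤ n) (hi1 : 1 ≤ i) (hi2 : i ≤ 2 * n) :
    lamU n i t (stdE n i) = stdE n i + t • lamRow n i := by
  rw [lamU_apply hn hi1 hi2, stdE_dotProduct_self hi1 hi2, mul_one]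

theorem map_lamU_finsetWedge_of_notMem (hn : 2 ≤ n) (hi1 : 1 ≤ i) (hi2 : i ≤ 2 * n)
    (hi : i ∉ I) : map (lamU n i t) (finsetWedge n k I) = finsetWedge n k I := by
  rw [finsetWedge, map_apply_ιMulti]
  congr 1
  funext p
  refine lamU_stdE_of_ne hn hi1 hi2 fun h => ?_
  rcases lt_or_ge p.val (I.sort (· ≤ ·)).length with hp | hp
  · rw [List.getD_eq_getElem _ _ hp] at h
    exact hi (h ▸ (Finset.mem_sort _).1 (List.getElem_mem hp))
  · rw [List.getD_eq_default _ _ hp] at h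
    omega

-- Moving a factor between the places of `1` and `2n` passes the other `n - 2` factors, which
-- is what the sign `(-1) ^ n` compensates.
theorem neg_one_pow_card_filter_lt_mul_wrapSign (hi1 : 1 ≤ i) (hKn : K ⊆ Finset.Icc 1 (2 * n))
    (hK : K.card + 2 = n) (hi : i ∉ K) (hj : j ∉ K)
    (hij : j = cyclicPred n i ∨ j = cyclicSucc n i) :
    (-1 : ℝ) ^ (K.filter (· < i)).card * wrapSign n i j = (-1) ^ (K.filter (· < j)).card := by
  have hbounds : ∀ x ∈ K, 1 ≤ x ∧ x ≤ 2 * n := fun x hx => Finset.mem_Icc.1 (hKn hx)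
  have hne : ∀ x ∈ K, x ≠ i ∧ x ≠ j := fun x hx =>
    ⟨ne_of_mem_of_not_mem hx hi, ne_of_mem_of_not_mem hx hj⟩
  by_cases hadj : i + 1 = j ∨ j + 1 = i
  · have hfilter : K.filter (· < i) = K.filter (· < j) := Finset.filter_congr fun x hx => by
      have hx' := hne x hx
      omega
    rw [wrapSign, if_pos hadj, mul_one, hfilter]
  have hone : K.filter (· < 1) = ∅ := Finset.filter_false_of_mem fun x hx => by
    have hx' := hbounds x hx
    omega
  have hlast (h : 2 * n ∉ K) : K.filter (· < 2 * n) = K := Finset.filter_true_of_mem fun x hx =>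
    (hbounds x hx).2.lt_of_ne (ne_of_mem_of_not_mem hx h)
  have hsign : (-1 : ℝ) ^ n = (-1) ^ K.card := by rw [← hK, pow_add, neg_one_sq, mul_one]
  rw [wrapSign, if_neg hadj, hsign]
  have hends : (i = 1 ∧ j = 2 * n) ∨ (i = 2 * n ∧ j = 1) := by
    unfold cyclicPred cyclicSucc at hij
    split_ifs at hij <;> omega
  rcases hends with ⟨rfl, rfl⟩ | ⟨rfl, rfl⟩
  · rw [hone, hlast hj, Finset.card_empty, pow_zero, one_mul]
  · rw [hone, hlast hi, Finset.card_empty, pow_zero, ← mul_pow, neg_one_mul, neg_neg, one_pow]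

theorem smul_wrapSign_smul_ι_mul_finsetWedge (hi1 : 1 ≤ i) (hKn : K ⊆ Finset.Icc 1 (2 * n))
    (hK : K.card = k) (hk : k + 2 = n) (hi : i ∉ K)
    (hij : j = cyclicPred n i ∨ j = cyclicSucc n i) :
    (-1 : ℝ) ^ (K.filter (· < i)).card • wrapSign n i j • (ι ℝ (stdE n j) * finsetWedge n k K) =
      if j ∉ K then finsetWedge n (k + 1) (insert j K) else 0 := by
  split_ifs with hj
  · rw [ι_mul_finsetWedge_of_mem hK hj, smul_zero, smul_zero]
  · rw [smul_smul, neg_one_pow_card_filter_lt_mul_wrapSign hi1 hKn (by omega) hi hj hij,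
      finsetWedge_insert hK hj]

theorem map_lamU_finsetWedge_insert (hi1 : 1 ≤ i) (hi2 : i ≤ 2 * n)
    (hKn : K ⊆ Finset.Icc 1 (2 * n)) (hK : K.card = k) (hk : k + 2 = n) (hi : i ∉ K) :
    map (lamU n i t) (finsetWedge n (k + 1) (insert i K)) =
      finsetWedge n (k + 1) (insert i K) +
        t • ((if cyclicPred n i ∉ K then finsetWedge n (k + 1) (insert (cyclicPred n i) K)
            else 0) +
          if cyclicSucc n i ∉ K then finsetWedge n (k + 1) (insert (cyclicSucc n i) K)
            else 0) := by
  have hn : 2 ≤ n := by omega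
  have hpred := smul_wrapSign_smul_ι_mul_finsetWedge hi1 hKn hK hk hi (.inl rfl)
  have hsucc := smul_wrapSign_smul_ι_mul_finsetWedge hi1 hKn hK hk hi (.inr rfl)
  rw [finsetWedge_insert hK hi, map_smul, map_mul, map_apply_ι, lamU_stdE_self hn hi1 hi2,
    map_lamU_finsetWedge_of_notMem hn hi1 hi2 hi, ← hpred, ← hsucc, lamRow]
  simp only [map_add, map_smul, add_mul, smul_mul_assoc, smul_add]
  simp only [smul_comm t]

theorem map_lamU_finsetWedge (hn : 2 ≤ n) (hi1 : 1 ≤ i) (hi2 : i ≤ 2 * n)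
    (hIn : I ⊆ Finset.Icc 1 (2 * n)) (hI : I.card = n - 1) :
    map (lamU n i t) (finsetWedge n (n - 1) I) =
      finsetWedge n (n - 1) I +
        t • ((if i ∈ I ∧ cyclicPred n i ∉ I then
            finsetWedge n (n - 1) (insert (cyclicPred n i) (I.erase i)) else 0) +
          if i ∈ I ∧ cyclicSucc n i ∉ I then
            finsetWedge n (n - 1) (insert (cyclicSucc n i) (I.erase i)) else 0) := by
  by_cases hi : i ∈ I
  · obtain ⟨k, rfl⟩ : ∃ k, n = k + 2 := ⟨n - 2, by omega⟩
    have hcard : (I.erase i).card = k := by rw [Finset.card_erase_of_mem hi, hI]; omega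
    have hmap := map_lamU_finsetWedge_insert (t := t) hi1 hi2
      ((Finset.erase_subset i I).trans hIn) hcard rfl (Finset.notMem_erase i I)
    have hpred : cyclicPred (k + 2) i ≠ i := by unfold cyclicPred; split_ifs <;> omega
    have hsucc : cyclicSucc (k + 2) i ≠ i := by unfold cyclicSucc; split_ifs <;> omega
    simpa only [Finset.insert_erase hi, Finset.mem_erase, ne_eq, hpred, hsucc, hi,
      not_false_eq_true, true_and, Nat.add_succ_sub_one] using hmap
  · simp only [map_lamU_finsetWedge_of_notMem hn hi1 hi2 hi, hi, false_and, if_false, add_zero,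
      smul_zero]

end LamGenerator

section ConcordanceVector

open ExteriorAlgebra

variable {n i : ℕ} {t : ℝ} {A C C' : Finset (Finset ℕ)}

theorem map_lamU_concVec_of_singleton_mem (hn : 2 ≤ n) (hi1 : 1 ≤ i) (hi2 : i ≤ 2 * n)
    (hi : {i} ∈ A ∪ C) : map (lamU n i t) (concVec n A C) = concVec n A C := by
  rw [concVec_eq_sum, map_sum]
  exact Finset.sum_congr rfl fun I hI => map_lamU_finsetWedge_of_notMem hn hi1 hi2
    ((mem_concordantSets.1 hI).2.notMem_of_singleton_mem hi)

theorem ArcCompatible.concVec_isolate (h : ArcCompatible n i A C)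
    (h' : ArcCompatible n i (isolate A i) C') (hcard : A.card + C.card ≤ n + 1)
    (hcard' : (isolate A i).card + C'.card ≤ n + 1) (hi : i ∈ parityClass n i)
    (hiA : {i} ∉ A) :
    concVec n (isolate A i) C' =
      ∑ I ∈ concordantSets (Finset.Icc 1 (2 * n)) (n - 1) A C,
        ((if i ∈ I ∧ cyclicPred n i ∉ I then
            finsetWedge n (n - 1) (insert (cyclicPred n i) (I.erase i)) else 0) +
          if i ∈ I ∧ cyclicSucc n i ∉ I then
            finsetWedge n (n - 1) (insert (cyclicSucc n i) (I.erase i)) else 0) := by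
  obtain ⟨D, hD, hpD⟩ := h.right.exists_mem (cyclicPred_mem_parityClass_succ hi)
  obtain ⟨E, hE, hqE⟩ := h.right.exists_mem (cyclicSucc_mem_parityClass_succ hi)
  have hDE := h.ne_of_singleton_notMem hi hiA hD hE hpD hqE
  rw [h.right_eq_mergeBlocks_of_isolate h' hcard hcard' hD hE hDE hpD hqE, concVec_eq_sum]
  exact sum_concordantSets_isolate_mergeBlocks _ h.left h.right (disjoint_parityClass_succ n i)
    (parityClass_union_succ n i).subset hi hD hE hDE hpD hqE

theorem ArcCompatible.map_lamU_concVec (hn : 2 ≤ n) (h : ArcCompatible n i A C)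
    (h' : ArcCompatible n i (isolate A i) C') (hcard : A.card + C.card ≤ n + 1)
    (hcard' : (isolate A i).card + C'.card ≤ n + 1) (hi1 : 1 ≤ i) (hi2 : i ≤ 2 * n)
    (hiA : {i} ∉ A) :
    map (lamU n i t) (concVec n A C) =
      concVec n A C + t • concVec n (isolate A i) C' := by
  rw [h.concVec_isolate h' hcard hcard' (mem_parityClass.2 ⟨⟨hi1, hi2⟩, rfl⟩) hiA,
    concVec_eq_sum, map_sum, Finset.smul_sum, ← Finset.sum_add_distrib]
  refine Finset.sum_congr rfl fun I hI => ?_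
  obtain ⟨⟨hIn, hIcard⟩, -⟩ := mem_concordantSets.1 hI
  exact map_lamU_finsetWedge hn hi1 hi2 hIn hIcard

end ConcordanceVector

theorem lam_generators_on_concordance_basis (n : ℕ) (hn : 2 ≤ n) (t : ℝ)
    (i : ℕ) (hi1 : 1 ≤ i) (hi2 : i ≤ 2 * n)
    (σ σd : Finset (Finset ℕ)) (hσ : IsNCPair n σ σd) :
    (IsolatedIn σ σd i →
      ExteriorAlgebra.map (lamU n i t) (concVec n σ σd) = concVec n σ σd) ∧
    (¬ IsolatedIn σ σd i →
      ∀ τ τd : Finset (Finset ℕ), IsNCPair n τ τd →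
        ((i % 2 = 1 ∧ τ = isolate σ i) ∨ (i % 2 = 0 ∧ τd = isolate σd i)) →
        ExteriorAlgebra.map (lamU n i t) (concVec n σ σd) =
          concVec n σ σd + t • concVec n τ τd) := by
  refine ⟨fun hiso => ?_, fun hiso τ τd hτ hcases => ?_⟩
  · refine map_lamU_concVec_of_singleton_mem hn hi1 hi2 ?_
    unfold IsolatedIn at hiso
    split_ifs at hiso
    · exact Finset.mem_union_left _ hiso
    · exact Finset.mem_union_right _ hiso
  have hσcard : σ.card + σd.card = n + 1 := hσ.2.2.2.2.2
  have hτcard : τ.card + τd.card = n + 1 := hτ.2.2.2.2.2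
  rcases hcases with ⟨hodd, rfl⟩ | ⟨heven, rfl⟩
  · rw [IsolatedIn, if_pos hodd] at hiso
    exact (hσ.arcCompatible_of_odd hodd).map_lamU_concVec hn (hτ.arcCompatible_of_odd hodd)
      hσcard.le hτcard.le hi1 hi2 hiso
  · rw [IsolatedIn, if_neg (by omega)] at hiso
    rw [concVec_comm n σ, concVec_comm n τ]
    exact (hσ.arcCompatible_of_even heven).map_lamU_concVec hn (hτ.arcCompatible_of_even heven)
      (by omega) (by omega) hi1 hi2 hiso
end

section
/- Let S be an n×n real matrix, and let x, Ω(x), M(S), D, D̃, Λ_{2n} be defined from S as in the context. Assume that x is symmetric with all row sums zero, that Ω(x) has rank n−1, and that M(S) has rank n+1. Then the column space of Λ_{2n}·(M(S)·D)ᵀ equals the Λ_{2n}⁻¹-symplectic orthogonal complement {v ∈ ℝ^{2n} : Ω(x)·D̃·Λ_{2n}⁻¹·v = 0} of the row space of Ω(x)·D̃, and consequently the row space of Ω(x)·D̃ is contained in the column space of Λ_{2n}·(M(S)·D)ᵀ. -/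
open Matrix

noncomputable section

/-- The matrix `x` defined from `S` by `x_{ij} = S_{j,i} - S_{j,i-1}` (second index cyclic,
with the convention `S_{j,0} = S_{j,n}`); everything is written 0-indexed. -/
def xOf (n : ℕ) (S : Matrix (Fin n) (Fin n) ℝ) : Matrix (Fin n) (Fin n) ℝ :=
  fun a b =>
    S b a - S b (if a.val = 0 then ⟨n - 1, by have := b.isLt; omega⟩
                 else ⟨a.val - 1, by have := a.isLt; omega⟩)

/-- The `n × 2n` matrix `Ω(x)` (0-indexed reformulation of the 1-indexed description):
`Ω(x)[i,2j-1] = (-1)^{i+j} x_{ij}`, `Ω(x)[1,2] = 1`, `Ω(x)[1,2n] = (-1)^n`,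
`Ω(x)[i,2i-2] = Ω(x)[i,2i] = 1` for `2 ≤ i ≤ n`, all other even-column entries `0`. -/
def OmegaMat (n : ℕ) (x : Matrix (Fin n) (Fin n) ℝ) : Matrix (Fin n) (Fin (2 * n)) ℝ :=
  fun r c =>
    if c.val % 2 = 0 then
      (-1 : ℝ) ^ (r.val + c.val / 2) * x r ⟨c.val / 2, by have := c.isLt; omega⟩
    else if r.val = 0 then
      (if c.val = 1 then (1 : ℝ) else if c.val = 2 * n - 1 then (-1 : ℝ) ^ n else 0)
    else
      (if c.val = 2 * r.val - 1 ∨ c.val = 2 * r.val + 1 then (1 : ℝ) else 0)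

/-- The `(n+1) × 2n` matrix `M(S)`: first row `(0,1,0,1,…,0,1)`; row `i+1` has a `1` in
column `2i-1`, entries `S_{ij}` in the even columns `2j`, and `0` elsewhere. -/
def MMat (n : ℕ) (S : Matrix (Fin n) (Fin n) ℝ) : Matrix (Fin (n + 1)) (Fin (2 * n)) ℝ :=
  fun r c =>
    if r.val = 0 then (if c.val % 2 = 1 then (1 : ℝ) else 0)
    else if c.val % 2 = 1 then
      S ⟨r.val - 1, by have := r.isLt; have := c.isLt; omega⟩
        ⟨c.val / 2, by have := c.isLt; omega⟩
    else if c.val + 2 = 2 * r.val then 1 else 0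

/-- `D = diag(1,1,-1,-1,1,1,…)`. -/
def Dmat (n : ℕ) : Matrix (Fin (2 * n)) (Fin (2 * n)) ℝ :=
  Matrix.diagonal fun k => (-1 : ℝ) ^ (k.val / 2)

/-- `D̃ = diag(-1,1,-1,1,…)`, i.e. `D̃[k,k] = (-1)^k` (1-indexed). -/
def Dtil (n : ℕ) : Matrix (Fin (2 * n)) (Fin (2 * n)) ℝ :=
  Matrix.diagonal fun k => (-1 : ℝ) ^ (k.val + 1)

/-- The `2n × 2n` skew-symmetric tridiagonal matrix `Λ_{2n}` with
`Λ[i,i+1] = (-1)^{i+1}` and `Λ[i+1,i] = (-1)^i` (1-indexed). -/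
def LambdaMat (n : ℕ) : Matrix (Fin (2 * n)) (Fin (2 * n)) ℝ :=
  fun a b =>
    if b.val = a.val + 1 then (-1 : ℝ) ^ a.val
    else if a.val = b.val + 1 then (-1 : ℝ) ^ (b.val + 1)
    else 0

end

/-! Sort the `2n` columns by parity and let `ε = diag(1, -1, 1, …)`. Then `x = Δ Sᵀ`,
`Ω(x) = [ε x ε | ε Δ ε]`, `M(S)` is `[1 | S]` bordered by the row `[0 | 𝟙ᵀ]`, and
`Λ = [[0, B], [-Bᵀ, 0]]` with `B = ε ∇ ε`, where `Δ` and `∇` are the cyclic and the non-cyclic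
difference matrices. As `Δ 𝟙 = 0`, the product `Ω(x) D̃ (M(S) D)ᵀ` vanishes, so the range of
`Λ (M(S) D)ᵀ` lies in the kernel of `Ω(x) D̃ Λ⁻¹`; the ranks `n - 1` and `n + 1` add up to `2n`, so
the two are equal. Since `Δ = (1 - e₀ 𝟙ᵀ) ∇`, the row space of `Ω(x) D̃` is isotropic exactly when
`(1 - e₀ 𝟙ᵀ) xᵀ` is symmetric, and this matrix is `x` if `x` is symmetric with zero row sums.
-/

section LinearAlgebra

variable {ι κ μ K : Type*} [Fintype μ] [Fintype κ] [DecidableEq κ] [Field K]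
  {L : Matrix κ κ K}

theorem range_mulVecLin_mul_eq_ker_mul_inv {A : Matrix ι κ K} {B : Matrix κ μ K} (hL : IsUnit L.det)
    (hAB : A * B = 0) (hrank : A.rank + B.rank = Fintype.card κ) :
    LinearMap.range (L * B).mulVecLin = LinearMap.ker (A * L⁻¹).mulVecLin := by
  have range_le_ker : LinearMap.range (L * B).mulVecLin ≤ LinearMap.ker (A * L⁻¹).mulVecLin := by
    rw [LinearMap.range_le_ker_iff, ← mulVecLin_mul, Matrix.mul_assoc,
      nonsing_inv_mul_cancel_left _ _ hL, hAB, mulVecLin_zero]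
  refine Submodule.eq_of_le_of_finrank_eq range_le_ker ?_
  have rank_left : (L * B).rank = B.rank := rank_mul_eq_right_of_isUnit_det L B hL
  have rank_right : (A * L⁻¹).rank = A.rank :=
    rank_mul_eq_left_of_isUnit_det L⁻¹ A (isUnit_nonsing_inv_det L hL)
  have rank_nullity := LinearMap.finrank_range_add_finrank_ker (A * L⁻¹).mulVecLin
  rw [Module.finrank_fintype_fun_eq_card] at rank_nullity
  unfold Matrix.rank at rank_left rank_right hrank
  lia

theorem range_mulVecLin_transpose_le_ker_mul_inv {A : Matrix μ κ K} (hA : A * L⁻¹ * Aᵀ = 0) :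
    LinearMap.range Aᵀ.mulVecLin ≤ LinearMap.ker (A * L⁻¹).mulVecLin := by
  rw [LinearMap.range_le_ker_iff, ← mulVecLin_mul, hA, mulVecLin_zero]

end LinearAlgebra

section SkewBlocks

variable {ι μ R : Type*} [Fintype ι] [DecidableEq ι] [CommRing R] {B : Matrix ι ι R}

theorem fromBlocks_skew_mul_eq_one (hB : IsUnit B.det) :
    fromBlocks 0 B (-Bᵀ) 0 * fromBlocks 0 (-B⁻¹ᵀ) B⁻¹ 0 = 1 := by
  simp [fromBlocks_multiply, ← transpose_mul, mul_nonsing_inv _ hB, nonsing_inv_mul _ hB]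

theorem fromCols_mul_inv_fromBlocks_skew_mul_transpose (hB : IsUnit B.det) (X F : Matrix μ ι R) :
    fromCols X (F * B) * (fromBlocks 0 B (-Bᵀ) 0)⁻¹ * (fromCols X (F * B))ᵀ =
      F * Xᵀ - X * Fᵀ := by
  have inv_mul_transpose : B⁻¹ᵀ * (F * B)ᵀ = Fᵀ := by
    rw [← transpose_mul, mul_nonsing_inv_cancel_right _ _ hB]
  rw [inv_eq_right_inv (fromBlocks_skew_mul_eq_one hB), Matrix.mul_assoc, transpose_fromCols,
    fromBlocks_mul_fromRows, fromCols_mul_fromRows]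
  simp only [Matrix.zero_mul, Matrix.neg_mul, zero_add, add_zero, inv_mul_transpose]
  rw [Matrix.mul_assoc, mul_nonsing_inv_cancel_left _ _ hB, Matrix.mul_neg, neg_add_eq_sub]

end SkewBlocks

section DifferenceMatrices

variable (n : ℕ) (R : Type*) [CommRing R]

/-- The sign matrix `diag(1, -1, 1, …)`. -/
def alternatingSign : Matrix (Fin n) (Fin n) R :=
  diagonal fun k => (-1) ^ k.val

/-- The cyclic difference operator `v ↦ (v i - v (i - 1))ᵢ`, with indices modulo `n`. -/
def cyclicDiff : Matrix (Fin n) (Fin n) R :=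
  1 - Equiv.Perm.permMatrix R (finRotate n).symm

/-- The backward difference operator `v ↦ (v i - v (i - 1))ᵢ`, with the value before the first
entry read as `0`. -/
def backwardDiff : Matrix (Fin n) (Fin n) R :=
  1 - of fun i j => if i.val = j.val + 1 then 1 else 0

@[simp]
theorem alternatingSign_mul_self : alternatingSign n R * alternatingSign n R = 1 := by
  simp [alternatingSign, ← mul_pow]

@[simp]
theorem alternatingSign_mul_cancel_left {m : Type*} (A : Matrix (Fin n) m R) :
    alternatingSign n R * (alternatingSign n R * A) = A := by
  rw [← Matrix.mul_assoc, alternatingSign_mul_self, Matrix.one_mul]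

@[simp]
theorem transpose_alternatingSign : (alternatingSign n R)ᵀ = alternatingSign n R :=
  diagonal_transpose _

theorem isUnit_det_alternatingSign : IsUnit (alternatingSign n R).det :=
  isUnit_det_of_right_inverse (alternatingSign_mul_self n R)

variable {n R}

theorem alternatingSign_mul_mul_alternatingSign_apply (A : Matrix (Fin n) (Fin n) R)
    (i j : Fin n) :
    (alternatingSign n R * A * alternatingSign n R) i j = (-1) ^ (i.val + j.val) * A i j := by
  rw [alternatingSign, mul_diagonal, diagonal_mul, pow_add]
  ring

theorem val_finRotate_symm (i : Fin n) :
    ((finRotate n).symm i).val = if i.val = 0 then n - 1 else i.val - 1 := by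
  have := i.neZero
  split_ifs with hi
  · obtain ⟨m, rfl⟩ := Nat.exists_eq_succ_of_ne_zero (NeZero.ne n)
    rw [show i = finRotate (m + 1) (Fin.last m) by ext; simp [hi], Equiv.symm_apply_apply]
    simp
  · exact coe_finRotate_symm_of_ne_zero (Fin.val_ne_zero_iff.mp hi)

theorem cyclicDiff_apply (i j : Fin n) :
    cyclicDiff n R i j = (if i = j then 1 else 0) -
      if j.val = (if i.val = 0 then n - 1 else i.val - 1) then 1 else 0 := by
  rw [← val_finRotate_symm, cyclicDiff, Matrix.sub_apply, one_apply]
  simp only [PEquiv.toMatrix_apply, Equiv.toPEquiv_apply, Option.mem_some_iff, Fin.ext_iff,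
    eq_comm (a := j.val)]

theorem alternatingSign_mul_cyclicDiff_mul_alternatingSign_apply (hn : 2 ≤ n) (i j : Fin n) :
    (alternatingSign n R * cyclicDiff n R * alternatingSign n R) i j =
      if i = j ∨ i.val = j.val + 1 then 1
      else if i.val = 0 ∧ j.val + 1 = n then (-1) ^ n else 0 := by
  rw [alternatingSign_mul_mul_alternatingSign_apply, cyclicDiff_apply]
  rcases eq_or_ne i j with rfl | hij
  · have : i.val ≠ if i.val = 0 then n - 1 else i.val - 1 := by grind
    simp [this]
  by_cases hi : i.val = 0
  · by_cases hj : j.val + 1 = n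
    · have corner_sign : (-1 : R) ^ (n - 1) * -1 = (-1) ^ n := pow_sub_one_mul (by lia) _
      simp [hij, hi, show j.val = n - 1 by lia, show n - 1 + 1 = n by lia, show 0 ≠ n by lia,
        ← corner_sign]
    · simp [hij, hi, hj, show j.val ≠ n - 1 by lia]
  · by_cases hj : i.val = j.val + 1
    · simp [hij, hj]
    · simp [hij, hi, hj, show j.val ≠ i.val - 1 by lia]

variable (n R) in
theorem cyclicDiff_mulVec_one : cyclicDiff n R *ᵥ 1 = 0 := by
  rw [cyclicDiff, sub_mulVec, one_mulVec, permMatrix_mulVec]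
  exact sub_self 1

theorem alternatingSign_mul_backwardDiff_mul_alternatingSign_apply (i j : Fin n) :
    (alternatingSign n R * backwardDiff n R * alternatingSign n R) i j =
      if i = j ∨ i.val = j.val + 1 then 1 else 0 := by
  rw [alternatingSign_mul_mul_alternatingSign_apply, backwardDiff, Matrix.sub_apply, one_apply,
    of_apply]
  rcases eq_or_ne i j with rfl | hij
  · simp
  by_cases hj : i.val = j.val + 1
  · simp [hij, hj]
  · simp [hij, hj]

theorem isUnit_det_backwardDiff : IsUnit (backwardDiff n R).det := by
  have lower : (backwardDiff n R).IsLowerTriangular := by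
    intro i j hij
    have hij : i < j := hij
    simp [backwardDiff, one_apply, hij.ne, show i.val ≠ j.val + 1 by lia]
  rw [det_of_isLowerTriangular _ lower]
  simp [backwardDiff]

theorem one_vecMul_backwardDiff (j : Fin n) :
    (1 ᵥ* backwardDiff n R) j = if j.val + 1 = n then 1 else 0 := by
  have shift_sum : ∑ i : Fin n, (if i.val = j.val + 1 then (1 : R) else 0) =
      if j.val + 1 < n then 1 else 0 := by
    split_ifs with hj
    · have eq_next (i : Fin n) : i.val = j.val + 1 ↔ i = ⟨j.val + 1, hj⟩ := by rw [Fin.ext_iff]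
      simp only [eq_next, Finset.sum_ite_eq', Finset.mem_univ, if_true]
    · exact Finset.sum_eq_zero fun i _ => if_neg (by lia)
  simp only [vecMul, dotProduct, backwardDiff, Matrix.sub_apply, one_apply, of_apply,
    Pi.one_apply, one_mul, Finset.sum_sub_distrib, shift_sum,
    Finset.sum_ite_eq', Finset.mem_univ, if_true]
  grind

/-- The two difference operators differ only in the corner entry, which the column sums of
`backwardDiff` supply. -/
theorem cyclicDiff_eq_mul_backwardDiff [NeZero n] :
    cyclicDiff n R = (1 - vecMulVec (Pi.single 0 1) 1) * backwardDiff n R := by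
  ext i j
  rw [Matrix.sub_mul, Matrix.one_mul, vecMulVec_mul, Matrix.sub_apply, vecMulVec_apply,
    one_vecMul_backwardDiff, cyclicDiff_apply]
  simp only [backwardDiff, Matrix.sub_apply, one_apply, of_apply, Pi.single_apply, Fin.ext_iff,
    Fin.val_zero]
  grind

end DifferenceMatrices

section EvenOddBlocks

/-- The splitting of the columns of a matrix with `2 * n` columns into those with even 0-based
index `2 * k` (left summand) and those with odd 0-based index `2 * k + 1` (right summand). -/
def evenOddEquiv (n : ℕ) : Fin n ⊕ Fin n ≃ Fin (2 * n) where
  toFun := Sum.elim (fun k => ⟨2 * k.val, by lia⟩) (fun k => ⟨2 * k.val + 1, by lia⟩)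
  invFun c := if c.val % 2 = 0 then .inl ⟨c.val / 2, by lia⟩ else .inr ⟨c.val / 2, by lia⟩
  left_inv := by
    rintro (k | k)
    · simp
    · simp [show (2 * k.val + 1) / 2 = k.val by lia]
  right_inv c := by
    ext
    grind

/-- The splitting of the rows of a matrix with `n + 1` rows into the first row (right summand) and
the remaining ones (left summand). -/
def sumUnitEquivFinSucc (n : ℕ) : Fin n ⊕ Unit ≃ Fin (n + 1) :=
  ((finSuccEquiv n).trans (Equiv.optionEquivSumPUnit _)).symm

variable {n : ℕ}

@[simp]
theorem sumUnitEquivFinSucc_inl (k : Fin n) : sumUnitEquivFinSucc n (.inl k) = k.succ := by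
  simp [sumUnitEquivFinSucc]

@[simp]
theorem sumUnitEquivFinSucc_inr (u : Unit) : sumUnitEquivFinSucc n (.inr u) = 0 := by
  simp [sumUnitEquivFinSucc]

@[simp]
theorem val_evenOddEquiv_inl (k : Fin n) : (evenOddEquiv n (.inl k)).val = 2 * k.val := rfl

@[simp]
theorem val_evenOddEquiv_inr (k : Fin n) : (evenOddEquiv n (.inr k)).val = 2 * k.val + 1 := rfl

theorem xOf_eq_cyclicDiff_mul_transpose (S : Matrix (Fin n) (Fin n) ℝ) :
    xOf n S = cyclicDiff n ℝ * Sᵀ := by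
  ext i j
  rw [cyclicDiff, Matrix.sub_mul, Matrix.one_mul, PEquiv.toMatrix_toPEquiv_mul]
  simp only [xOf, Matrix.sub_apply, transpose_apply, submatrix_apply, id]
  congr 2
  ext
  rw [val_finRotate_symm, apply_ite Fin.val]

theorem omegaMat_submatrix_evenOddEquiv (hn : 2 ≤ n) (x : Matrix (Fin n) (Fin n) ℝ) :
    (OmegaMat n x).submatrix id (evenOddEquiv n) =
      fromCols (alternatingSign n ℝ * x * alternatingSign n ℝ)
        (alternatingSign n ℝ * cyclicDiff n ℝ * alternatingSign n ℝ) := by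
  ext i (j | j)
  · simp [OmegaMat, alternatingSign_mul_mul_alternatingSign_apply]
  · rw [fromCols_apply_inr, alternatingSign_mul_cyclicDiff_mul_alternatingSign_apply hn]
    simp only [OmegaMat, submatrix_apply, id, val_evenOddEquiv_inr, Fin.ext_iff]
    grind

theorem mMat_submatrix_evenOddEquiv (S : Matrix (Fin n) (Fin n) ℝ) :
    (MMat n S).submatrix (sumUnitEquivFinSucc n) (evenOddEquiv n) =
      fromBlocks 1 S 0 (replicateRow Unit (1 : Fin n → ℝ)) := by
  ext (i | i) (j | j)
  · simp [MMat, one_apply, Fin.ext_iff, show 2 * j.val + 2 = 2 * (i.val + 1) ↔ i.val = j.val by lia]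
  · simp [MMat, show (2 * j.val + 1) / 2 = j.val by lia]
  · simp [MMat]
  · simp [MMat]

theorem dmat_submatrix_evenOddEquiv :
    (Dmat n).submatrix (evenOddEquiv n) (evenOddEquiv n) =
      fromBlocks (alternatingSign n ℝ) 0 0 (alternatingSign n ℝ) := by
  rw [Dmat, submatrix_diagonal_equiv, alternatingSign, fromBlocks_diagonal]
  congr 1
  ext (k | k)
  · simp
  · simp [show (2 * k.val + 1) / 2 = k.val by lia]

theorem dtil_submatrix_evenOddEquiv :
    (Dtil n).submatrix (evenOddEquiv n) (evenOddEquiv n) = fromBlocks (-1) 0 0 1 := by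
  have neg_one_eq : (-1 : Matrix (Fin n) (Fin n) ℝ) = diagonal fun _ => -1 := diagonal_neg _
  rw [Dtil, submatrix_diagonal_equiv, neg_one_eq, ← diagonal_one, fromBlocks_diagonal]
  congr 1
  ext (k | k) <;> simp [pow_succ, pow_mul]

theorem lambdaMat_submatrix_evenOddEquiv :
    (LambdaMat n).submatrix (evenOddEquiv n) (evenOddEquiv n) =
      fromBlocks 0 (alternatingSign n ℝ * backwardDiff n ℝ * alternatingSign n ℝ)
        (-(alternatingSign n ℝ * backwardDiff n ℝ * alternatingSign n ℝ)ᵀ) 0 := by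
  ext (i | i) (j | j)
  · simp [LambdaMat, show 2 * j.val ≠ 2 * i.val + 1 by lia, show 2 * i.val ≠ 2 * j.val + 1 by lia]
  · rw [fromBlocks_apply₁₂, alternatingSign_mul_backwardDiff_mul_alternatingSign_apply]
    simp only [LambdaMat, submatrix_apply, val_evenOddEquiv_inl, val_evenOddEquiv_inr, Fin.ext_iff,
      pow_succ, (even_two_mul _).neg_one_pow]
    grind
  · rw [fromBlocks_apply₂₁, Matrix.neg_apply, transpose_apply,
      alternatingSign_mul_backwardDiff_mul_alternatingSign_apply]
    simp only [LambdaMat, submatrix_apply, val_evenOddEquiv_inl, val_evenOddEquiv_inr, Fin.ext_iff,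
      pow_succ, (even_two_mul _).neg_one_pow]
    grind
  · simp [LambdaMat, show 2 * j.val ≠ 2 * i.val + 1 by lia, show 2 * i.val ≠ 2 * j.val + 1 by lia]

theorem omegaMat_mul_dtil_submatrix_evenOddEquiv (hn : 2 ≤ n) (x : Matrix (Fin n) (Fin n) ℝ) :
    (OmegaMat n x * Dtil n).submatrix id (evenOddEquiv n) =
      fromCols (-(alternatingSign n ℝ * x * alternatingSign n ℝ))
        (alternatingSign n ℝ * cyclicDiff n ℝ * alternatingSign n ℝ) := by
  rw [← submatrix_mul_equiv _ _ _ (evenOddEquiv n), omegaMat_submatrix_evenOddEquiv hn,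
    dtil_submatrix_evenOddEquiv, fromCols_mul_fromBlocks]
  simp

theorem mMat_mul_dmat_submatrix_evenOddEquiv (S : Matrix (Fin n) (Fin n) ℝ) :
    (MMat n S * Dmat n).submatrix (sumUnitEquivFinSucc n) (evenOddEquiv n) =
      fromBlocks (alternatingSign n ℝ) (S * alternatingSign n ℝ)
        0 (replicateRow Unit (1 : Fin n → ℝ) * alternatingSign n ℝ) := by
  rw [← submatrix_mul_equiv _ _ _ (evenOddEquiv n), mMat_submatrix_evenOddEquiv,
    dmat_submatrix_evenOddEquiv, fromBlocks_multiply]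
  simp

end EvenOddBlocks

section SymplecticComplement

variable {n : ℕ}

theorem isUnit_det_dmat : IsUnit (Dmat n).det :=
  isUnit_det_of_right_inverse (B := Dmat n) (by simp [Dmat, ← mul_pow])

theorem isUnit_det_dtil : IsUnit (Dtil n).det :=
  isUnit_det_of_right_inverse (B := Dtil n) (by simp [Dtil, ← mul_pow])

theorem isUnit_det_alternatingSign_mul_backwardDiff_mul :
    IsUnit (alternatingSign n ℝ * backwardDiff n ℝ * alternatingSign n ℝ).det := by
  rw [det_mul, det_mul]
  exact ((isUnit_det_alternatingSign n ℝ).mul isUnit_det_backwardDiff).mul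
    (isUnit_det_alternatingSign n ℝ)

theorem isUnit_det_lambdaMat : IsUnit (LambdaMat n).det := by
  rw [← det_submatrix_equiv_self (evenOddEquiv n), lambdaMat_submatrix_evenOddEquiv]
  exact isUnit_det_of_right_inverse
    (fromBlocks_skew_mul_eq_one isUnit_det_alternatingSign_mul_backwardDiff_mul)

theorem omegaMat_mul_dtil_mul_transpose_mMat_mul_dmat (hn : 2 ≤ n)
    (S : Matrix (Fin n) (Fin n) ℝ) :
    OmegaMat n (xOf n S) * Dtil n * (MMat n S * Dmat n)ᵀ = 0 := by
  have cyclicDiff_mul_col : cyclicDiff n ℝ * replicateCol Unit (1 : Fin n → ℝ) = 0 := by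
    rw [← replicateCol_mulVec, cyclicDiff_mulVec_one, replicateCol_zero]
  have blocks : (OmegaMat n (xOf n S) * Dtil n * (MMat n S * Dmat n)ᵀ).submatrix id
      (sumUnitEquivFinSucc n) = 0 := by
    rw [← submatrix_mul_equiv _ _ _ (evenOddEquiv n), ← transpose_submatrix,
      omegaMat_mul_dtil_submatrix_evenOddEquiv hn, mMat_mul_dmat_submatrix_evenOddEquiv,
      fromBlocks_transpose, fromCols_mul_fromBlocks, xOf_eq_cyclicDiff_mul_transpose]
    simp [Matrix.mul_assoc, cyclicDiff_mul_col]
  ext i j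
  obtain ⟨k, rfl⟩ := (sumUnitEquivFinSucc n).surjective j
  exact congrFun₂ blocks i k

theorem omegaMat_mul_dtil_isotropic (hn : 2 ≤ n) {x : Matrix (Fin n) (Fin n) ℝ}
    (hsymm : x.IsSymm) (hrow : ∀ i, ∑ j, x i j = 0) :
    OmegaMat n x * Dtil n * (LambdaMat n)⁻¹ * (OmegaMat n x * Dtil n)ᵀ = 0 := by
  have : NeZero n := ⟨by lia⟩
  have mulVec_one : x *ᵥ 1 = 0 := by
    ext i
    simp [mulVec, dotProduct, hrow]
  have mul_one_sub : x * (1 - vecMulVec 1 (Pi.single 0 1)) = x := by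
    rw [Matrix.mul_sub, Matrix.mul_one, mul_vecMulVec, mulVec_one, zero_vecMulVec,
      sub_zero]
  have one_sub_mul : (1 - vecMulVec (Pi.single 0 1) 1) * x = x := by
    simpa [hsymm.eq] using congrArg transpose mul_one_sub
  have cyclicDiff_conj : alternatingSign n ℝ * cyclicDiff n ℝ * alternatingSign n ℝ =
      alternatingSign n ℝ * (1 - vecMulVec (Pi.single 0 1) 1) * alternatingSign n ℝ *
        (alternatingSign n ℝ * backwardDiff n ℝ * alternatingSign n ℝ) := by
    simp only [cyclicDiff_eq_mul_backwardDiff, Matrix.mul_assoc, alternatingSign_mul_cancel_left]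
  rw [← submatrix_id_id (_ * _), ← submatrix_mul_equiv _ _ _ (evenOddEquiv n),
    ← submatrix_mul_equiv _ _ _ (evenOddEquiv n), ← inv_submatrix_equiv, ← transpose_submatrix,
    lambdaMat_submatrix_evenOddEquiv, omegaMat_mul_dtil_submatrix_evenOddEquiv hn,
    cyclicDiff_conj, fromCols_mul_inv_fromBlocks_skew_mul_transpose
      isUnit_det_alternatingSign_mul_backwardDiff_mul]
  simp only [transpose_neg, transpose_mul, transpose_alternatingSign, hsymm.eq, transpose_sub,
    transpose_one, transpose_vecMulVec, Matrix.mul_neg, Matrix.neg_mul, Matrix.mul_assoc,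
    alternatingSign_mul_cancel_left]
  rw [← Matrix.mul_assoc _ x, one_sub_mul, ← Matrix.mul_assoc x, mul_one_sub, sub_self]

end SymplecticComplement

theorem symplectic_complement_inclusion (n : ℕ) (hn : 2 ≤ n) (S : Matrix (Fin n) (Fin n) ℝ)
    (hsymm : (xOf n S).IsSymm) (hrow : ∀ i, ∑ j, xOf n S i j = 0)
    (hrankOmega : (OmegaMat n (xOf n S)).rank = n - 1)
    (hrankM : (MMat n S).rank = n + 1) :
    LinearMap.range (LambdaMat n * (MMat n S * Dmat n)ᵀ).mulVecLin =
      LinearMap.ker (OmegaMat n (xOf n S) * Dtil n * (LambdaMat n)⁻¹).mulVecLin ∧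
    LinearMap.range ((OmegaMat n (xOf n S) * Dtil n)ᵀ).mulVecLin ≤
      LinearMap.range (LambdaMat n * (MMat n S * Dmat n)ᵀ).mulVecLin := by
  have rank_omega : (OmegaMat n (xOf n S) * Dtil n).rank = n - 1 :=
    (rank_mul_eq_left_of_isUnit_det _ _ isUnit_det_dtil).trans hrankOmega
  have rank_M : (MMat n S * Dmat n)ᵀ.rank = n + 1 := by
    rw [rank_transpose, rank_mul_eq_left_of_isUnit_det _ _ isUnit_det_dmat, hrankM]
  have range_eq_ker := range_mulVecLin_mul_eq_ker_mul_inv isUnit_det_lambdaMat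
    (omegaMat_mul_dtil_mul_transpose_mMat_mul_dmat hn S)
    (by rw [rank_omega, rank_M, Fintype.card_fin]; lia)
  refine ⟨range_eq_ker, range_eq_ker ▸ ?_⟩
  exact range_mulVecLin_transpose_le_ker_mul_inv (omegaMat_mul_dtil_isotropic hn hsymm hrow)
end
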